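/- arXiv:1106.0082 — 2 statements merged into one kernel-verified Lean document; each statement's English description precedes it below -/
import Mathlib

section
/- Let F be a differential field of characteristic zero with derivation ∂ and constants C = {c ∈ F : ∂c = 0}. Let M : F^ℓ → F^ℓ be the ℓ×ℓ matrix differential operator (Mu)_i = Σ_{j=1}^ℓ Σ_{n≥0} a_{ij,n} ∂^n u_j with coefficients a_{ij,n} ∈ F (finitely many nonzero), and let N_1,…,N_ℓ, h_1,…,h_ℓ ∈ ℤ≥0 be such that a_{ij,n} = 0 whenever n > N_j − h_i (a majorant of M). Assume that the leading matrix Ā = (ā_{ij}) ∈ Mat_{ℓ×ℓ}(F), where ā_{ij} = a_{ij, N_j−h_i} if N_j − h_i ≥ 0 and ā_{ij} = 0 otherwise, is invertible. Then the space of solutions of the homogeneous system Mu = 0 satisfies dim_C {u ∈ F^ℓ : Mu = 0} ≤ d := Σ_{j=1}^ℓ (N_j − h_j). If moreover F is linearly closed, then M : F^ℓ → F^ℓ is surjective (so the inhomogeneous system Mu = b has a solution for every b ∈ F^ℓ) and dim_C {u ∈ F^ℓ : Mu = 0} = d. -/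
/-- A derivation on a field: an additive map satisfying the Leibniz rule. -/
structure IsDerivation {F : Type*} [Field F] (d : F → F) : Prop where
  map_add : ∀ a b : F, d (a + b) = d a + d b
  leibniz : ∀ a b : F, d (a * b) = d a * b + a * d b

/-- A differential field `(F, d)` is linearly closed if every linear differential equation
`a_M d^M u + ⋯ + a_1 d u + a_0 u = b` with `a_M ≠ 0` has a solution in `F`,
and has a nonzero solution for `b = 0`, provided that `M ≥ 1`. -/
def LinearlyClosed {F : Type*} [Field F] (d : F → F) : Prop :=
  ∀ (M : ℕ) (a : ℕ → F), a M ≠ 0 →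
    (∀ b : F, ∃ u : F, ∑ n ∈ Finset.range (M + 1), a n * d^[n] u = b) ∧
    (1 ≤ M → ∃ u : F, u ≠ 0 ∧ ∑ n ∈ Finset.range (M + 1), a n * d^[n] u = 0)

/-!
Row vectors of differential operators form the free left module `F[∂]^ℓ`, on which the matrix `M`
acts by right multiplication. Filter it by order, shifted by the `N_j` on the target and by the
`h_i` on the source: on leading coefficients `M` acts as the invertible matrix `Ā`, so right
multiplication is injective, compatible with the filtrations, and its cokernel has dimension
`∑ N_j - ∑ h_j` over `F`.

Evaluating operators at `u` identifies the solutions of `Mu = 0` with the horizontal vectors of the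
connection dual to this cokernel. Horizontal vectors that are linearly independent over the
constants are linearly independent over `F`, whence the upper bound. Over a linearly closed field
the horizontal vectors span every finite-dimensional connection: otherwise there are a vector `v`
outside their span `H` and an operator `p` of minimal order with `p v ∈ H`; a nonzero solution `z`
of the equation adjoint to `p` makes `z p = ∂ q`, which produces a vector `w ∉ H` with `∂ w ∈ H`,
and `w` becomes horizontal after subtracting an element of `H`. In particular `∂` is surjective on
such a connection, and this yields the surjectivity of `M`.
-/

open Finsupp Module

section Connections

variable {C F V : Type*} [Field C] [Field F] [Algebra C F] [AddCommGroup V] [Module F V]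
  [Module C V] {D : Derivation C F F}

/-- A connection on an `F`-vector space over the differential field `(F, D)`; equivalently, the
action of `∂` in a left module over the ring `F[∂]` of differential operators. -/
def IsConnection (D : Derivation C F F) (δ : End C V) : Prop :=
  ∀ (f : F) (v : V), δ (f • v) = D f • v + f • δ v

lemma isConnection_derivation (D : Derivation C F F) : IsConnection D (D : End C F) := by
  intro f v
  simp [mul_comm, add_comm]

namespace IsConnection

variable {δ : End C V}

lemma map_sum_smul_of_horizontal (hδ : IsConnection D δ) {ι : Type*} [Fintype ι] {v : ι → V}
    (hv : ∀ i, δ (v i) = 0) (f : ι → F) : δ (∑ i, f i • v i) = ∑ i, D (f i) • v i := by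
  simp [hδ _ _, hv]

lemma linearIndependent_of_horizontal [IsScalarTower C F V] (hδ : IsConnection D δ)
    (hC : ∀ x, D x = 0 → x ∈ Set.range (algebraMap C F)) {ι : Type*} {v : ι → V}
    (hv : ∀ i, δ (v i) = 0) (hli : LinearIndependent C v) : LinearIndependent F v := by
  classical
  suffices h : ∀ s : Finset ι, LinearIndepOn F v s from
    linearIndependent_iff_finset_linearIndependent.2 h
  intro s
  induction s using Finset.induction_on with
  | empty => simp
  | insert a s ha ih =>
    have ha' : a ∉ (s : Set ι) := by simpa using ha
    rw [Finset.coe_insert, linearIndepOn_insert ha']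
    refine ⟨ih, fun hmem ↦ ?_⟩
    obtain ⟨f, hf⟩ := (Submodule.mem_span_image_finset_iff_exists_fun F).1 hmem
    have hDf : ∑ i, D (f i) • v i = 0 := by
      rw [← hδ.map_sum_smul_of_horizontal (fun i : s ↦ hv i), hf, hv]
    choose c hc using fun i ↦ hC (f i) (Fintype.linearIndependent_iff.1 ih _ hDf i)
    refine ((linearIndepOn_insert ha').1 (hli.linearIndepOn (s := insert a ↑s))).2 ?_
    refine (Submodule.mem_span_image_finset_iff_exists_fun C).2 ⟨c, ?_⟩
    simp only [← hf, ← hc, algebraMap_smul]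

lemma rank_span_of_le_ker [IsScalarTower C F V] (hδ : IsConnection D δ)
    (hC : ∀ x, D x = 0 → x ∈ Set.range (algebraMap C F)) {H : Submodule C V}
    (hH : H ≤ LinearMap.ker δ) :
    Module.rank F (Submodule.span F (H : Set V)) = Module.rank C H := by
  let b := Basis.ofVectorSpace C H
  have hli : LinearIndependent F (H.subtype ∘ b) :=
    hδ.linearIndependent_of_horizontal hC (fun i ↦ hH (b i).2)
      (b.linearIndependent.map' H.subtype H.ker_subtype)
  have hspan : Submodule.span C (Set.range (H.subtype ∘ b)) = H := by
    rw [Set.range_comp, ← Submodule.map_span, b.span_eq, Submodule.map_subtype_top]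
  rw [← b.mk_eq_rank'', ← Cardinal.mk_range_eq _ hli.injective, ← rank_span hli,
    ← Submodule.span_span_of_tower C F (Set.range _), hspan]

/-- The space of those horizontal vectors of the connection `δ` that lie in `W`. -/
def horizontal (δ : End C V) (W : Submodule F V) [IsScalarTower C F V] : Submodule C V :=
  W.restrictScalars C ⊓ LinearMap.ker δ

end IsConnection
end Connections

section Shift

variable {C F V κ : Type*} [Field C] [Field F] [Algebra C F] [AddCommGroup V] [Module F V]
  [Module C V] {D : Derivation C F F}

/-- The operator `∑ fₖ eₖ ↦ ∑ D fₖ eₖ + ∑ fₖ e_{s k}` on finitely supported families. For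
`κ = ι × ℕ` and `s (j, n) = (j, n + 1)` it is left multiplication by `∂` on the free module
`F[∂]^ι`, where `e_{(j, n)}` stands for `∂ⁿ` in component `j`. -/
noncomputable def shift (D : Derivation C F F) (s : κ → κ) : End C (κ →₀ F) :=
  mapRange.linearMap D + lmapDomain F C s

variable {s : κ → κ}

lemma shift_single (k : κ) (f : F) :
    shift D s (single k f) = single k (D f) + single (s k) f := by
  simp [shift]

lemma shift_apply_map (hs : s.Injective) (p : κ →₀ F) (k : κ) :
    shift D s p (s k) = D (p (s k)) + p k := by
  simp [shift, mapDomain_apply hs]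

lemma shift_apply_of_notMem_range (p : κ →₀ F) {k : κ} (hk : k ∉ Set.range s) :
    shift D s p k = D (p k) := by
  simp [shift, mapDomain_of_notMem_range _ _ hk]

lemma shift_mem_supported {t t' : Set κ} (htt' : t ⊆ t') (hst : Set.MapsTo s t t') {p : κ →₀ F}
    (hp : p ∈ supported F F t) : shift D s p ∈ supported F F t' := by
  classical
  refine Submodule.add_mem _ ?_ ?_
  · exact fun k hk ↦ htt' (hp (support_mapRange (hf := map_zero D) hk))
  · intro k hk
    obtain ⟨i, hi, rfl⟩ := Finset.mem_image.1 (mapDomain_support hk)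
    exact hst (hp hi)

lemma isConnection_shift : IsConnection D (shift D s) := by
  intro f p
  induction p using Finsupp.induction_linear with
  | zero => simp
  | add p q hp hq => simp only [smul_add, map_add, hp, hq]; abel
  | single k g =>
    simp only [smul_single, shift_single, smul_add, smul_eq_mul, Derivation.leibniz, single_add,
      mul_comm g]
    abel

lemma IsConnection.map_linearCombination {δ : End C V} (hδ : IsConnection D δ) {v : κ → V}
    (hv : ∀ k, δ (v k) = v (s k)) (p : κ →₀ F) :
    δ (linearCombination F v p) = linearCombination F v (shift D s p) := by
  induction p using Finsupp.induction_linear with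
  | zero => simp
  | add p q hp hq => simp only [map_add, hp, hq]
  | single k f => simp [shift_single, hδ _ _, hv]

end Shift

section Iterate

variable {F V : Type*} [Field F] [AddCommGroup V] [Module F V] {δ : V → V} {W : Submodule F V}

lemma linearCombination_iterate_mem (hW : Set.MapsTo δ W W) {v : V} (hv : v ∈ W) (p : ℕ →₀ F) :
    linearCombination F (fun n ↦ δ^[n] v) p ∈ W :=
  Submodule.sum_mem _ fun n _ ↦ W.smul_mem _ (hW.iterate n hv)

lemma exists_ne_zero_linearCombination_iterate_eq_zero [Module.Finite F W]
    (hW : Set.MapsTo δ W W) {v : V} (hv : v ∈ W) :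
    ∃ p : ℕ →₀ F, p ≠ 0 ∧ linearCombination F (fun n ↦ δ^[n] v) p = 0 := by
  by_contra! h
  refine Module.Finite.not_linearIndependent_of_infinite (R := F)
    (fun n ↦ (⟨δ^[n] v, hW.iterate n hv⟩ : W)) (.of_comp W.subtype ?_)
  exact linearIndependent_iff.2 fun p hp ↦ by_contra fun hp0 ↦ h p hp0 hp

end Iterate

section LinearlyClosed

variable {C F V : Type*} [Field C] [Field F] [Algebra C F] [AddCommGroup V] [Module F V]
  [Module C V] {D : Derivation C F F}

lemma mem_supported_Iio_of_apply_eq_zero {R : Type*} [Semiring R] {m : ℕ} {p : ℕ →₀ R}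
    (hp : p ∈ supported R R (Set.Iio (m + 1))) (hpm : p m = 0) : p ∈ supported R R (Set.Iio m) := by
  rw [mem_supported'] at hp ⊢
  intro n hn
  obtain rfl | hnm := eq_or_ne n m
  · exact hpm
  · exact hp n (by simp only [Set.mem_Iio] at hn ⊢; omega)

lemma shift_mem_supported_Iio {m : ℕ} {p : ℕ →₀ F} (hp : p ∈ supported F F (Set.Iio m)) :
    shift D Nat.succ p ∈ supported F F (Set.Iio (m + 1)) :=
  shift_mem_supported (Set.Iio_subset_Iio m.le_succ) (fun _ ↦ Nat.succ_lt_succ) hp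

lemma shift_apply_of_mem_supported_Iio {m : ℕ} {p : ℕ →₀ F}
    (hp : p ∈ supported F F (Set.Iio (m + 1))) : shift D Nat.succ p (m + 1) = p m := by
  rw [shift_apply_map Nat.succ_injective, Nat.succ_eq_add_one,
    (mem_supported' F p).1 hp (m + 1) (by simp), map_zero, zero_add]

lemma eq_single_zero_of_mem_supported_Iio_one {R : Type*} [Semiring R] {p : ℕ →₀ R}
    (hp : p ∈ supported R R (Set.Iio 1)) : p = single 0 (p 0) := by
  ext n
  cases n with
  | zero => simp
  | succ n => simpa using (mem_supported' R p).1 hp (n + 1) (by simp)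

/-- The remainder `∑ (-D)ⁿ pₙ` of the operator `∑ pₙ ∂ⁿ` modulo the right ideal `∂ F[∂]`. -/
noncomputable def leftRemainder (D : Derivation C F F) : (ℕ →₀ F) →ₗ[C] F :=
  lsum C fun n ↦ (-D : End C F) ^ n

lemma leftRemainder_single (n : ℕ) (f : F) :
    leftRemainder D (single n f) = ((-D : End C F) ^ n) f := by
  simp [leftRemainder]

lemma leftRemainder_shift (p : ℕ →₀ F) : leftRemainder D (shift D Nat.succ p) = 0 := by
  induction p using Finsupp.induction_linear with
  | zero => simp
  | add p q hp hq => simp [hp, hq]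
  | single n f => simp [leftRemainder_single, shift_single, pow_succ]

lemma exists_shift_add_leftRemainder_eq {m : ℕ} {p : ℕ →₀ F}
    (hp : p ∈ supported F F (Set.Iio (m + 1))) :
    ∃ q ∈ supported F F (Set.Iio m), shift D Nat.succ q + single 0 (leftRemainder D p) = p := by
  induction m generalizing p with
  | zero =>
    rw [eq_single_zero_of_mem_supported_Iio_one hp]
    exact ⟨0, zero_mem _, by simp [leftRemainder_single]⟩
  | succ m ih =>
    have hlead : single m (p (m + 1)) ∈ supported F F (Set.Iio (m + 1)) :=
      single_mem_supported _ _ (Nat.lt_succ_self m)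
    obtain ⟨q, hq, hpq⟩ := ih <| mem_supported_Iio_of_apply_eq_zero
      (sub_mem hp (shift_mem_supported_Iio (D := D) hlead))
      (by simp [shift_apply_of_mem_supported_Iio hlead])
    refine ⟨single m (p (m + 1)) + q, add_mem hlead ?_, ?_⟩
    · exact supported_mono (Set.Iio_subset_Iio m.le_succ) hq
    · rw [map_sub, leftRemainder_shift, sub_zero] at hpq
      rw [map_add, add_assoc, hpq, add_sub_cancel]

/-- The formal adjoint `∑ (-∂)ⁿ pₙ` of the operator `∑ pₙ ∂ⁿ`. -/
noncomputable def formalAdjoint (D : Derivation C F F) : (ℕ →₀ F) →ₗ[C] (ℕ →₀ F) :=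
  lsum C fun n ↦ ((-shift D Nat.succ) ^ n) ∘ₗ lsingle 0

lemma linearCombination_iterate_shift (p : ℕ →₀ F) (z : F) :
    linearCombination F (fun n ↦ D^[n] z) (shift D Nat.succ p) =
      D (linearCombination F (fun n ↦ D^[n] z) p) :=
  ((isConnection_derivation D).map_linearCombination
    (fun n ↦ (Function.iterate_succ_apply' D n z).symm) p).symm

lemma linearCombination_formalAdjoint (p : ℕ →₀ F) (z : F) :
    linearCombination F (fun n ↦ D^[n] z) (formalAdjoint D p) = leftRemainder D (z • p) := by
  have hpow (n : ℕ) (f : F) : linearCombination F (fun n ↦ D^[n] z)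
      (((-shift D Nat.succ) ^ n) (single 0 f)) = ((-D : End C F) ^ n) (f * z) := by
    induction n with
    | zero => simp
    | succ n ih =>
      simp only [pow_succ', Module.End.mul_apply, LinearMap.neg_apply, map_neg,
        linearCombination_iterate_shift, ih]
      rfl
  induction p using Finsupp.induction_linear with
  | zero => simp
  | add p q hp hq => simp only [map_add, smul_add, hp, hq]
  | single n f =>
    simp [formalAdjoint, hpow, smul_single, leftRemainder_single, mul_comm f, -single_mul]

lemma neg_shift_pow_single_mem (n : ℕ) (f : F) :
    ((-shift D Nat.succ) ^ n) (single 0 f) ∈ supported F F (Set.Iio (n + 1)) := by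
  induction n with
  | zero => exact single_mem_supported _ _ Nat.one_pos
  | succ n ih =>
    rw [pow_succ', Module.End.mul_apply, LinearMap.neg_apply]
    exact neg_mem (shift_mem_supported_Iio ih)

lemma neg_shift_pow_single_apply (n : ℕ) (f : F) :
    ((-shift D Nat.succ) ^ n) (single 0 f) n = (-1) ^ n * f := by
  induction n with
  | zero => simp
  | succ n ih =>
    rw [pow_succ', Module.End.mul_apply, LinearMap.neg_apply, Finsupp.neg_apply,
      shift_apply_of_mem_supported_Iio (neg_shift_pow_single_mem n f), ih, pow_succ]
    ring

lemma formalAdjoint_mem_supported {m : ℕ} {p : ℕ →₀ F}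
    (hp : p ∈ supported F F (Set.Iio m)) :
    formalAdjoint D p ∈ supported F F (Set.Iio m) := by
  rw [formalAdjoint, lsum_apply]
  exact Submodule.sum_mem _ fun n hn ↦
    supported_mono (Set.Iio_subset_Iio (hp hn)) (neg_shift_pow_single_mem n _)

lemma formalAdjoint_apply {m : ℕ} {p : ℕ →₀ F} (hp : p ∈ supported F F (Set.Iio (m + 1))) :
    formalAdjoint D p m = (-1) ^ m * p m := by
  have hlt : formalAdjoint D (p.erase m) ∈ supported F F (Set.Iio m) := by
    refine formalAdjoint_mem_supported (mem_supported_Iio_of_apply_eq_zero ?_ erase_same)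
    exact fun n hn ↦ hp (Finset.mem_of_mem_erase (support_erase (f := p) ▸ hn))
  nth_rw 1 [← single_add_erase m p]
  rw [map_add, Finsupp.add_apply, (mem_supported' F _).1 hlt m (by simp), add_zero]
  simp [formalAdjoint, neg_shift_pow_single_apply]

lemma sum_range_mul_iterate {m : ℕ} {p : ℕ →₀ F} (hp : p ∈ supported F F (Set.Iio m))
    (u : F) : ∑ n ∈ Finset.range m, p n * D^[n] u = linearCombination F (fun n ↦ D^[n] u) p := by
  rw [linearCombination_apply, sum_of_support_subset p (s := Finset.range m)
    (fun n hn ↦ by simpa using hp hn)] <;> simp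

lemma LinearlyClosed.exists_shift_eq_smul (hD : LinearlyClosed D) {m : ℕ} {p : ℕ →₀ F}
    (hp : p ∈ supported F F (Set.Iio (m + 2))) (hpm : p (m + 1) ≠ 0) :
    ∃ z : F, z ≠ 0 ∧ ∃ q ∈ supported F F (Set.Iio (m + 1)), shift D Nat.succ q = z • p := by
  obtain ⟨z, hz, hzp⟩ := (hD (m + 1) (formalAdjoint D p)
    (by simp [formalAdjoint_apply hp, hpm])).2 (Nat.succ_pos m)
  rw [sum_range_mul_iterate (formalAdjoint_mem_supported hp), linearCombination_formalAdjoint]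
    at hzp
  obtain ⟨q, hq, hqp⟩ := exists_shift_add_leftRemainder_eq (D := D)
    (Submodule.smul_mem (supported F F _) z hp)
  exact ⟨z, hz, q, hq, by simpa [hzp] using hqp⟩

lemma LinearlyClosed.surjective (hD : LinearlyClosed D) : Function.Surjective D := by
  intro b
  obtain ⟨u, hu⟩ := (hD 1 (Pi.single 1 1) (by simp)).1 b
  exact ⟨u, by simpa [Finset.sum_range_succ] using hu⟩

namespace IsConnection

variable {δ : End C V} {W : Submodule F V}

lemma exists_notMem_map_mem_of_linearCombination_mem (hδ : IsConnection D δ)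
    (hD : LinearlyClosed D) (hW : Set.MapsTo δ W W) {H : Submodule F V} {v : V} (hv : v ∈ W)
    (hvH : v ∉ H) {m : ℕ} {p : ℕ →₀ F} (hp : p ∈ supported F F (Set.Iio m)) (hp0 : p ≠ 0)
    (hpH : linearCombination F (fun n ↦ δ^[n] v) p ∈ H) :
    ∃ w ∈ W, w ∉ H ∧ δ w ∈ H := by
  induction m generalizing p with
  | zero => simp_all
  | succ m ih =>
    by_cases hpm : p m = 0
    · exact ih (mem_supported_Iio_of_apply_eq_zero hp hpm) hp0 hpH
    cases m with
    | zero =>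
      rw [eq_single_zero_of_mem_supported_Iio_one hp, linearCombination_single] at hpH
      exact absurd ((H.smul_mem_iff hpm).1 hpH) hvH
    | succ m =>
      obtain ⟨z, hz, q, hq, hqp⟩ := hD.exists_shift_eq_smul hp hpm
      have hδq : δ (linearCombination F (fun n ↦ δ^[n] v) q) ∈ H := by
        rw [hδ.map_linearCombination (s := Nat.succ)
          (fun n ↦ (Function.iterate_succ_apply' δ n v).symm), hqp, map_smul]
        exact H.smul_mem z hpH
      by_cases hqH : linearCombination F (fun n ↦ δ^[n] v) q ∈ H
      · refine ih hq ?_ hqH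
        rintro rfl
        simp [hz, hp0, eq_comm] at hqp
      · exact ⟨_, linearCombination_iterate_mem hW hv q, hqH, hδq⟩

lemma exists_notMem_map_mem (hδ : IsConnection D δ) (hD : LinearlyClosed D) [Module.Finite F W]
    (hW : Set.MapsTo δ W W) {H : Submodule F V} {v : V} (hv : v ∈ W) (hvH : v ∉ H) :
    ∃ w ∈ W, w ∉ H ∧ δ w ∈ H := by
  obtain ⟨p, hp0, hp⟩ := exists_ne_zero_linearCombination_iterate_eq_zero hW hv
  obtain ⟨m, hm⟩ := p.support.exists_nat_subset_range
  refine hδ.exists_notMem_map_mem_of_linearCombination_mem hD hW hv hvH (m := m)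
    (fun n hn ↦ by simpa using hm hn) hp0 (hp ▸ H.zero_mem)

variable [IsScalarTower C F V]

lemma exists_mem_span_horizontal_map_eq (hδ : IsConnection D δ)
    (hD : Function.Surjective D) {v : V} (hv : v ∈ Submodule.span F (horizontal δ W : Set V)) :
    ∃ w ∈ Submodule.span F (horizontal δ W : Set V), δ w = v := by
  obtain ⟨n, f, w, rfl⟩ := Submodule.mem_span_set'.1 hv
  choose g hg using fun i ↦ hD (f i)
  refine ⟨∑ i, g i • (w i : V), ?_, ?_⟩
  · exact Submodule.sum_mem _ fun i _ ↦ Submodule.smul_mem _ _ (Submodule.subset_span (w i).2)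
  · rw [hδ.map_sum_smul_of_horizontal fun i ↦ (w i).2.2]
    simp only [hg]

lemma span_horizontal_le : Submodule.span F (horizontal δ W : Set V) ≤ W :=
  Submodule.span_le.2 fun _ hv ↦ hv.1

lemma span_horizontal_eq (hδ : IsConnection D δ) (hD : LinearlyClosed D) [Module.Finite F W]
    (hW : Set.MapsTo δ W W) : Submodule.span F (horizontal δ W : Set V) = W := by
  refine span_horizontal_le.antisymm fun v hv ↦ by_contra fun hvH ↦ ?_
  obtain ⟨w, hw, hwH, hδw⟩ := hδ.exists_notMem_map_mem hD hW hv hvH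
  obtain ⟨x, hx, hxw⟩ := hδ.exists_mem_span_horizontal_map_eq hD.surjective hδw
  refine hwH ((Submodule.sub_mem_iff_left _ hx).1 (Submodule.subset_span ⟨?_, ?_⟩))
  · exact W.sub_mem hw (span_horizontal_le hx)
  · simp [hxw]

lemma exists_mem_map_eq (hδ : IsConnection D δ) (hD : LinearlyClosed D) [Module.Finite F W]
    (hW : Set.MapsTo δ W W) {v : V} (hv : v ∈ W) : ∃ w ∈ W, δ w = v := by
  rw [← hδ.span_horizontal_eq hD hW] at hv ⊢
  exact hδ.exists_mem_span_horizontal_map_eq hD.surjective hv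

lemma rank_horizontal_le (hδ : IsConnection D δ)
    (hC : ∀ x, D x = 0 → x ∈ Set.range (algebraMap C F)) :
    Module.rank C (horizontal δ W) ≤ Module.rank F W :=
  (hδ.rank_span_of_le_ker hC inf_le_right).symm.trans_le (Submodule.rank_mono span_horizontal_le)

lemma rank_horizontal_eq (hδ : IsConnection D δ)
    (hC : ∀ x, D x = 0 → x ∈ Set.range (algebraMap C F)) (hD : LinearlyClosed D)
    [Module.Finite F W] (hW : Set.MapsTo δ W W) :
    Module.rank C (horizontal δ W) = Module.rank F W := by
  rw [← hδ.rank_span_of_le_ker hC (H := horizontal δ W) inf_le_right, hδ.span_horizontal_eq hD hW]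

end IsConnection
end LinearlyClosed

section Dual

variable {C F V V' ι ι' : Type*} [Field C] [Field F] [Algebra C F] [AddCommGroup V] [Module F V]
  [Module C V] [AddCommGroup V'] [Module F V']
  [Module C V'] {D : Derivation C F F} {δ : End C V}

/-- The dual `φ ↦ D ∘ φ - φ ∘ δ` of the connection `δ`. Its horizontal vectors are the morphisms
of `F[∂]`-modules from `V` to `F`. -/
def IsConnection.dual (hδ : IsConnection D δ) : End C (Dual F V) where
  toFun φ :=
    { toFun v := D (φ v) - φ (δ v)
      map_add' v w := by simp only [map_add]; abel
      map_smul' f v := by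
        simp only [map_smul, map_add, hδ f v, smul_eq_mul, D.leibniz, RingHom.id_apply]
        ring }
  map_add' φ ψ := by
    ext v
    simp only [LinearMap.add_apply, LinearMap.coe_mk, AddHom.coe_mk, map_add]
    ring
  map_smul' c φ := by ext v; simp [smul_sub]

lemma IsConnection.dual_apply (hδ : IsConnection D δ) (φ : Dual F V) (v : V) :
    hδ.dual φ v = D (φ v) - φ (δ v) := rfl

lemma IsConnection.isConnection_dual (hδ : IsConnection D δ) : IsConnection D hδ.dual := by
  intro f φ
  ext v
  simp only [hδ.dual_apply, LinearMap.add_apply, LinearMap.smul_apply, smul_eq_mul, D.leibniz]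
  ring

lemma IsConnection.dual_dualMap {δ' : End C V'} (hδ : IsConnection D δ) (hδ' : IsConnection D δ')
    {f : V →ₗ[F] V'} (hf : Function.Semiconj f δ δ') (φ : Dual F V') :
    hδ.dual (f.dualMap φ) = f.dualMap (hδ'.dual φ) := by
  ext v
  simp [dual_apply, hf v]

/-- The shift by `∂` on `F[∂]^ι`, the basis vector `(j, n)` being `∂ⁿ` in component `j`. -/
noncomputable abbrev freeShift (D : Derivation C F F) (ι : Type*) : End C (ι × ℕ →₀ F) :=
  shift D (Prod.map id Nat.succ)

/-- The map `F[∂]^ι → V` of modules over `F[∂]` that sends the `j`-th basis vector to `v j`, where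
`∂` acts on `V` by `δ`. -/
noncomputable def orbitMap (δ : V → V) (v : ι → V) : (ι × ℕ →₀ F) →ₗ[F] V :=
  linearCombination F fun k ↦ δ^[k.2] (v k.1)

/-- The connection dual to `freeShift D ι`. -/
noncomputable abbrev freeDual (D : Derivation C F F) (ι : Type*) : End C (Dual F (ι × ℕ →₀ F)) :=
  (isConnection_shift (D := D) (s := Prod.map (id : ι → ι) Nat.succ)).dual

lemma isConnection_freeDual : IsConnection D (freeDual D ι) :=
  isConnection_shift.isConnection_dual

lemma orbitMap_freeShift (hδ : IsConnection D δ) (v : ι → V) (p : ι × ℕ →₀ F) :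
    orbitMap δ v (freeShift D ι p) = δ (orbitMap δ v p) :=
  (hδ.map_linearCombination
    (fun k : ι × ℕ ↦ (Function.iterate_succ_apply' δ k.2 (v k.1)).symm) p).symm

lemma comp_orbitMap {δ : V → V} {δ' : V' → V'} {f : V →ₗ[F] V'} (hf : Function.Semiconj f δ δ')
    (v : ι → V) : f ∘ₗ orbitMap δ v = orbitMap δ' (f ∘ v) := by
  ext k
  simpa [orbitMap] using hf.iterate_right k.2 (v k.1)

lemma orbitMap_single (δ : V → V) (v : ι → V) (j : ι) (n : ℕ) :
    orbitMap (F := F) δ v (single (j, n) 1) = δ^[n] (v j) := by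
  simp [orbitMap]

lemma orbitMap_freeShift_single :
    orbitMap (F := F) (freeShift D ι) (fun j ↦ single (j, 0) 1) = LinearMap.id := by
  have hpow (j : ι) (n : ℕ) : (freeShift D ι)^[n] (single (j, 0) 1) = single (j, n) 1 := by
    induction n with
    | zero => rfl
    | succ n ih => simp [Function.iterate_succ_apply', ih, shift_single]
  ext k
  simp [orbitMap, hpow]

/-- The action `p ↦ p(u)` of row operators `p ∈ F[∂]^ι` on a vector `u`. -/
noncomputable def actOn (D : Derivation C F F) : (ι → F) →ₗ[C] Dual F (ι × ℕ →₀ F) where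
  toFun := orbitMap D
  map_add' u v := by ext k; simp [orbitMap, iterate_map_add]
  map_smul' c u := by
    ext k
    simpa [orbitMap] using
      Function.Commute.iterate_left (g := fun x ↦ c • x) ((D : End C F).map_smul c) k.2 (u k.1)

lemma actOn_single_zero (u : ι → F) (j : ι) : actOn D u (single (j, 0) 1) = u j :=
  orbitMap_single D u j 0

lemma actOn_injective : Function.Injective (actOn (ι := ι) D) := fun u v huv ↦
  funext fun j ↦ by rw [← actOn_single_zero (D := D) u, huv, actOn_single_zero]

lemma ker_freeDual : LinearMap.ker (freeDual D ι) = LinearMap.range (actOn D) := by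
  ext φ
  refine ⟨fun hφ ↦ ⟨fun j ↦ φ (single (j, 0) 1), ?_⟩, ?_⟩
  · have hsemi : Function.Semiconj φ (freeShift D ι) D := fun p ↦
      (sub_eq_zero.1 (LinearMap.congr_fun hφ p)).symm
    exact (comp_orbitMap hsemi _).symm.trans (by rw [orbitMap_freeShift_single, LinearMap.comp_id])
  · rintro ⟨u, rfl⟩
    exact LinearMap.ext fun p ↦
      sub_eq_zero.2 (orbitMap_freeShift (isConnection_derivation D) u p).symm

/-- The operator `u ↦ (m i)(u)` on `F^ι` whose rows are the operators `m i ∈ F[∂]^ι`. -/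
noncomputable def matrixOperator (D : Derivation C F F) (m : ι' → ι × ℕ →₀ F) :
    (ι → F) →ₗ[C] (ι' → F) :=
  LinearMap.pi fun i ↦ LinearMap.applyₗ' C (m i) ∘ₗ actOn D

/-- The right multiplication `F[∂]^ι' → F[∂]^ι` by the matrix of operators with rows `m i`. -/
noncomputable abbrev rightMul (D : Derivation C F F) (m : ι' → ι × ℕ →₀ F) :
    (ι' × ℕ →₀ F) →ₗ[F] (ι × ℕ →₀ F) :=
  orbitMap (freeShift D ι) m

variable {m : ι' → ι × ℕ →₀ F}

lemma dualMap_rightMul_actOn (u : ι → F) :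
    (rightMul D m).dualMap (actOn D u) = actOn D (matrixOperator D m u) :=
  comp_orbitMap (orbitMap_freeShift (isConnection_derivation D) u) m

lemma freeDual_dualMap_rightMul (φ : Dual F (ι × ℕ →₀ F)) :
    freeDual D ι' ((rightMul D m).dualMap φ) = (rightMul D m).dualMap (freeDual D ι φ) :=
  isConnection_shift.dual_dualMap isConnection_shift (orbitMap_freeShift isConnection_shift m) φ

lemma mapsTo_freeDual_ker_dualMap :
    Set.MapsTo (freeDual D ι) (LinearMap.ker (rightMul D m).dualMap)
      (LinearMap.ker (rightMul D m).dualMap) := fun φ hφ ↦ by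
  rw [SetLike.mem_coe, LinearMap.mem_ker] at hφ ⊢
  rw [← freeDual_dualMap_rightMul, hφ, map_zero]

open IsConnection

lemma map_actOn_ker_matrixOperator : (LinearMap.ker (matrixOperator D m)).map (actOn D) =
    horizontal (freeDual D ι) (LinearMap.ker (rightMul D m).dualMap) := by
  have hmem (u : ι → F) : actOn D u ∈ LinearMap.ker (rightMul D m).dualMap ↔
      u ∈ LinearMap.ker (matrixOperator D m) := by
    rw [LinearMap.mem_ker, dualMap_rightMul_actOn, map_eq_zero_iff _ actOn_injective,
      LinearMap.mem_ker]
  ext φ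
  rw [horizontal, ker_freeDual]
  constructor
  · rintro ⟨u, hu, rfl⟩
    exact ⟨(hmem u).2 hu, u, rfl⟩
  · rintro ⟨hφ, u, rfl⟩
    exact ⟨u, (hmem u).1 hφ, rfl⟩

lemma rank_ker_matrixOperator : Module.rank C (LinearMap.ker (matrixOperator D m)) =
    Module.rank C (horizontal (freeDual D ι) (LinearMap.ker (rightMul D m).dualMap)) :=
  map_actOn_ker_matrixOperator (D := D) (m := m) ▸
    (Submodule.equivMapOfInjective _ actOn_injective _).rank_eq

lemma rank_ker_matrixOperator_le (hC : ∀ x, D x = 0 → x ∈ Set.range (algebraMap C F)) :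
    Module.rank C (LinearMap.ker (matrixOperator D m)) ≤
      Module.rank F (LinearMap.ker (rightMul D m).dualMap) :=
  rank_ker_matrixOperator.trans_le (isConnection_freeDual.rank_horizontal_le hC)

lemma rank_ker_matrixOperator_eq (hC : ∀ x, D x = 0 → x ∈ Set.range (algebraMap C F))
    (hD : LinearlyClosed D) [Module.Finite F (LinearMap.ker (rightMul D m).dualMap)] :
    Module.rank C (LinearMap.ker (matrixOperator D m)) =
      Module.rank F (LinearMap.ker (rightMul D m).dualMap) :=
  rank_ker_matrixOperator.trans
    (isConnection_freeDual.rank_horizontal_eq hC hD mapsTo_freeDual_ker_dualMap)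

lemma surjective_matrixOperator (hD : LinearlyClosed D)
    [Module.Finite F (LinearMap.ker (rightMul D m).dualMap)]
    (hm : Function.Injective (rightMul D m)) : Function.Surjective (matrixOperator D m) := by
  intro b
  obtain ⟨ψ, hψ⟩ := LinearMap.dualMap_surjective_of_injective hm (actOn D b)
  have hactOn : freeDual D ι' (actOn D b) = 0 := ker_freeDual.ge ⟨b, rfl⟩
  have hker : freeDual D ι ψ ∈ LinearMap.ker (rightMul D m).dualMap := by
    rw [LinearMap.mem_ker, ← freeDual_dualMap_rightMul, hψ, hactOn]
  obtain ⟨χ, hχ, hχψ⟩ :=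
    isConnection_freeDual.exists_mem_map_eq hD mapsTo_freeDual_ker_dualMap hker
  have hhor : ψ - χ ∈ LinearMap.ker (freeDual D ι) := by
    rw [LinearMap.mem_ker, map_sub, hχψ, sub_self]
  obtain ⟨u, hu⟩ := ker_freeDual.le hhor
  refine ⟨u, actOn_injective (D := D) ?_⟩
  rw [← dualMap_rightMul_actOn, hu, map_sub, hψ, LinearMap.mem_ker.1 hχ, sub_zero]

end Dual

section KerDualMap

variable {F V V' : Type*} [Field F] [AddCommGroup V] [Module F V] [AddCommGroup V'] [Module F V']
  {f : V' →ₗ[F] V} {U : Submodule F V} [Module.Finite F U]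

lemma finite_quotient_of_sup_eq_top {R : Submodule F V} (h : U ⊔ R = ⊤) :
    Module.Finite F (V ⧸ R) :=
  .of_surjective (R.mkQ.domRestrict U) <| LinearMap.range_eq_top.1 <| by
    rw [LinearMap.range_domRestrict, Submodule.map_mkQ_eq_top, sup_comm, h]

lemma finrank_quotient_add_finrank_inf {R : Submodule F V} (h : U ⊔ R = ⊤) :
    finrank F (V ⧸ R) + finrank F (U ⊓ R : Submodule F V) = finrank F U := by
  have hker : (LinearMap.ker (R.mkQ.domRestrict U)).map U.subtype = U ⊓ R := by
    rw [LinearMap.ker_domRestrict, Submodule.ker_mkQ, Submodule.map_comap_subtype]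
  have hrange : LinearMap.range (R.mkQ.domRestrict U) = ⊤ := by
    rw [LinearMap.range_domRestrict, Submodule.map_mkQ_eq_top, sup_comm, h]
  rw [← LinearMap.finrank_range_add_finrank_ker (R.mkQ.domRestrict U), hrange, finrank_top, ← hker,
    Submodule.finrank_map_subtype_eq]

lemma finite_ker_dualMap_of_sup_range_eq_top (h : U ⊔ LinearMap.range f = ⊤) :
    Module.Finite F (LinearMap.ker f.dualMap) := by
  have := finite_quotient_of_sup_eq_top h
  rw [LinearMap.ker_dualMap_eq_dualAnnihilator_range]
  exact .equiv (Submodule.dualQuotEquivDualAnnihilator _)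

lemma finrank_ker_dualMap_add_finrank_inf (h : U ⊔ LinearMap.range f = ⊤) :
    finrank F (LinearMap.ker f.dualMap) + finrank F (U ⊓ LinearMap.range f : Submodule F V) =
      finrank F U := by
  rw [LinearMap.ker_dualMap_eq_dualAnnihilator_range,
    ← (Submodule.dualQuotEquivDualAnnihilator _).finrank_eq, Subspace.dual_finrank_eq,
    finrank_quotient_add_finrank_inf h]

end KerDualMap

section LeadingMatrix

variable {C F ι ι' : Type*} [Field C] [Field F] [Algebra C F] {D : Derivation C F F}
  {N : ι → ℕ} {h : ι' → ℕ} {r : ℤ}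

/-- The space of row operators in `F[∂]^ι` whose `j`-th component has order less than `N j + r`,
for every `j`. -/
def orderLT (F : Type*) [Field F] (N : ι → ℕ) (r : ℤ) : Submodule F (ι × ℕ →₀ F) :=
  supported F F {k | (k.2 : ℤ) < N k.1 + r}

lemma mem_orderLT {p : ι × ℕ →₀ F} :
    p ∈ orderLT F N r ↔ ∀ j (n : ℕ), (N j : ℤ) + r ≤ n → p (j, n) = 0 := by
  simp [orderLT, mem_supported', not_lt, Prod.forall]

lemma orderLT_mono : Monotone (orderLT F N) := fun r s hrs ↦
  supported_mono fun k (hk : (k.2 : ℤ) < N k.1 + r) ↦ by rw [Set.mem_ofPred_eq]; lia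

lemma exists_mem_orderLT (N : ι → ℕ) (r : ℤ) (p : ι × ℕ →₀ F) :
    ∃ k : ℕ, p ∈ orderLT F N (r + k) := by
  refine ⟨p.support.sup Prod.snd + 1 + (-r).toNat, fun x hx ↦ ?_⟩
  have hle : x.2 ≤ p.support.sup Prod.snd := Finset.le_sup (f := Prod.snd) hx
  rw [Set.mem_ofPred_eq]
  lia

lemma orderLT_zero [Fintype ι] (N : ι → ℕ) :
    orderLT F N 0 = supported F F ((Finset.univ.sigma fun j ↦ Finset.range (N j)).map
      (Equiv.sigmaEquivProd ι ℕ).toEmbedding) := by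
  refine congrArg _ (Set.ext fun k ↦ ?_)
  simp [Prod.ext_iff]

instance [Finite ι] : Module.Finite F (orderLT F N 0) := by
  cases nonempty_fintype ι
  rw [orderLT_zero]
  exact .equiv (supportedEquivFinsupp _).symm

lemma finrank_orderLT_zero [Fintype ι] (N : ι → ℕ) : finrank F (orderLT F N 0) = ∑ j, N j := by
  rw [orderLT_zero, (supportedEquivFinsupp _).finrank_eq, finrank_finsupp_self]
  simp

/-- The symbol of order `N + r` of a row operator in `F[∂]^ι`: its `j`-th entry is the coefficient
of `∂ ^ (N j + r)` in the `j`-th component, or zero if `N j + r` is negative. -/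
noncomputable def symbol (N : ι → ℕ) (r : ℤ) : (ι × ℕ →₀ F) →ₗ[F] (ι → F) :=
  LinearMap.pi fun j ↦ if 0 ≤ N j + r then lapply (j, (N j + r).toNat) else 0

lemma symbol_apply_of_eq {j : ι} {n : ℕ} (hn : N j + r = n) (p : ι × ℕ →₀ F) :
    symbol N r p j = p (j, n) := by
  simp [symbol, hn]

lemma symbol_apply_of_neg {j : ι} (hj : N j + r < 0) (p : ι × ℕ →₀ F) : symbol N r p j = 0 := by
  simp [symbol, hj.not_ge]

lemma symbol_single [DecidableEq ι] {j : ι} {n : ℕ} (hn : N j + r = n) (f : F) :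
    symbol N r (single (j, n) f) = Pi.single j f := by
  ext i
  obtain rfl | hij := eq_or_ne i j
  · simp [symbol_apply_of_eq hn]
  · rcases lt_or_ge ((N i : ℤ) + r) 0 with hi | hi
    · simp [symbol_apply_of_neg hi, hij]
    · obtain ⟨k, hk⟩ := Int.eq_ofNat_of_zero_le hi
      simp [symbol_apply_of_eq hk, hij]

lemma symbol_eq_zero_of_mem {p : ι × ℕ →₀ F} (hp : p ∈ orderLT F N r) : symbol N r p = 0 := by
  ext j
  rcases lt_or_ge ((N j : ℤ) + r) 0 with hj | hj
  · exact symbol_apply_of_neg hj p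
  · obtain ⟨n, hn⟩ := Int.eq_ofNat_of_zero_le hj
    exact (symbol_apply_of_eq hn p).trans (mem_orderLT.1 hp j n hn.le)

lemma mem_orderLT_of_symbol_eq_zero {p : ι × ℕ →₀ F} (hp : p ∈ orderLT F N (r + 1))
    (hsymb : symbol N r p = 0) : p ∈ orderLT F N r := by
  rw [mem_orderLT] at hp ⊢
  intro j n hn
  rcases hn.eq_or_lt with hn | hn
  · exact (symbol_apply_of_eq hn p).symm.trans (congr_fun hsymb j)
  · exact hp j n (by lia)

lemma exists_mem_orderLT_symbol_eq [Finite ι] (N : ι → ℕ) (k : ℕ) (c : ι → F) :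
    ∃ p ∈ orderLT F N (k + 1), symbol N k p = c := by
  classical
  cases nonempty_fintype ι
  refine ⟨∑ i, single (i, N i + k) (c i), ?_, ?_⟩
  · exact Submodule.sum_mem _ fun i _ ↦ single_mem_supported _ _ (by simp)
  · simp [symbol_single, Finset.univ_sum_single]

lemma freeShift_mem_orderLT {p : ι × ℕ →₀ F} (hp : p ∈ orderLT F N r) :
    freeShift D ι p ∈ orderLT F N (r + 1) := by
  refine shift_mem_supported (fun k hk ↦ ?_) (fun k hk ↦ ?_) hp <;>
    simp only [Set.mem_ofPred_eq, Prod.map_fst, Prod.map_snd, id] at hk ⊢ <;> lia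

lemma symbol_freeShift {p : ι × ℕ →₀ F} (hp : p ∈ orderLT F N (r + 1)) :
    symbol N (r + 1) (freeShift D ι p) = symbol N r p := by
  have hinj : (Prod.map (id : ι → ι) Nat.succ).Injective :=
    Function.injective_id.prodMap Nat.succ_injective
  have hzero (j : ι) (n : ℕ) (hn : (N j : ℤ) + (r + 1) = n) : p (j, n) = 0 :=
    mem_orderLT.1 hp j n hn.le
  ext j
  rcases lt_trichotomy ((N j : ℤ) + (r + 1)) 0 with hj | hj | hj
  · rw [symbol_apply_of_neg hj, symbol_apply_of_neg (by lia)]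
  · rw [symbol_apply_of_eq (n := 0) (by simpa using hj), symbol_apply_of_neg (by lia),
      shift_apply_of_notMem_range _ (by simp), hzero j 0 (by simpa using hj), map_zero]
  · obtain ⟨n, hn⟩ : ∃ n : ℕ, (N j : ℤ) + r = n := Int.eq_ofNat_of_zero_le (by lia)
    rw [symbol_apply_of_eq (n := n + 1) (by lia), symbol_apply_of_eq hn]
    have hshift := shift_apply_map (D := D) hinj p (j, n)
    rwa [Prod.map_apply, id, Nat.succ_eq_add_one, hzero j (n + 1) (by lia), map_zero, zero_add]
      at hshift

/-- The leading matrix, with respect to the weights `N` and `h`, of the matrix of differential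
operators with rows `m i`. -/
noncomputable def leadingMatrix (N : ι → ℕ) (h : ι' → ℕ) (m : ι' → ι × ℕ →₀ F) : Matrix ι' ι F :=
  Matrix.of fun i ↦ symbol N (-h i) (m i)

variable {m : ι' → ι × ℕ →₀ F} (hm : ∀ i, m i ∈ orderLT F N (1 - h i))

include hm

lemma iterate_freeShift_mem_orderLT (i : ι') (n : ℕ) :
    (freeShift D ι)^[n] (m i) ∈ orderLT F N (n - h i + 1) := by
  induction n with
  | zero => simpa [add_comm, sub_eq_add_neg] using hm i
  | succ n ih =>
    rw [Function.iterate_succ_apply', show ((n + 1 : ℕ) - h i + 1 : ℤ) = n - h i + 1 + 1 by lia]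
    exact freeShift_mem_orderLT ih

lemma symbol_iterate_freeShift (i : ι') (n : ℕ) :
    symbol N (n - h i) ((freeShift D ι)^[n] (m i)) = leadingMatrix N h m i := by
  induction n with
  | zero =>
    rw [Nat.cast_zero, zero_sub]
    rfl
  | succ n ih =>
    rw [Function.iterate_succ_apply', show ((n + 1 : ℕ) - h i : ℤ) = n - h i + 1 by lia,
      symbol_freeShift (iterate_freeShift_mem_orderLT hm i n), ih]

lemma rightMul_mem_orderLT {q : ι' × ℕ →₀ F} (hq : q ∈ orderLT F h r) :
    rightMul D m q ∈ orderLT F N r :=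
  Submodule.sum_mem _ fun k hk ↦ Submodule.smul_mem _ _ <| orderLT_mono
    (by have hlt : (k.2 : ℤ) < h k.1 + r := hq hk; lia) (iterate_freeShift_mem_orderLT hm k.1 k.2)

open scoped Matrix in
lemma symbol_rightMul [Fintype ι'] {q : ι' × ℕ →₀ F} (hq : q ∈ orderLT F h (r + 1)) :
    symbol N r (rightMul D m q) = symbol h r q ᵥ* leadingMatrix N h m := by
  classical
  suffices h : Set.EqOn (symbol N r ∘ₗ rightMul D m)
      ((leadingMatrix N h m).vecMulLinear ∘ₗ symbol h r) (orderLT F h (r + 1)) from h hq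
  rw [orderLT, supported_eq_span_single]
  refine LinearMap.eqOn_span ?_
  rintro _ ⟨⟨i, n⟩, hn : (n : ℤ) < h i + (r + 1), rfl⟩
  rw [LinearMap.comp_apply, LinearMap.comp_apply, Matrix.vecMulLinear_apply]
  by_cases hr : h i + r = n
  · obtain rfl : r = n - h i := by lia
    rw [symbol_single hr, Matrix.single_one_vecMul, rightMul, orbitMap_single,
      symbol_iterate_freeShift hm, Matrix.row]
  · have hlt : single (i, n) 1 ∈ orderLT F h r :=
      single_mem_supported _ _ (lt_of_le_of_ne (by lia) (Ne.symm hr))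
    rw [symbol_eq_zero_of_mem hlt, Matrix.zero_vecMul,
      symbol_eq_zero_of_mem (rightMul_mem_orderLT hm hlt)]

end LeadingMatrix

section InvertibleLeadingMatrix

open scoped Matrix

variable {C F ι : Type*} [Field C] [Field F] [Algebra C F] {D : Derivation C F F}
  {N h : ι → ℕ} [Fintype ι] [DecidableEq ι] {m : ι → ι × ℕ →₀ F}
  (hm : ∀ i, m i ∈ orderLT F N (1 - h i)) (hunit : IsUnit (leadingMatrix N h m))

include hm hunit

lemma mem_orderLT_of_rightMul_mem {q : ι × ℕ →₀ F} {r : ℤ}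
    (hq : rightMul D m q ∈ orderLT F N r) : q ∈ orderLT F h r := by
  obtain ⟨k, hk⟩ := exists_mem_orderLT h r q
  induction k with
  | zero => simpa using hk
  | succ k ih =>
    rw [Nat.cast_succ, ← add_assoc] at hk
    refine ih (mem_orderLT_of_symbol_eq_zero hk (Matrix.vecMul_injective_of_isUnit hunit ?_))
    beta_reduce
    rw [← symbol_rightMul (D := D) hm hk, Matrix.zero_vecMul]
    exact symbol_eq_zero_of_mem (orderLT_mono (by lia) hq)

lemma rightMul_injective : Function.Injective (rightMul D m) := by
  rw [injective_iff_map_eq_zero]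
  intro q hq
  ext ⟨i, n⟩
  refine mem_orderLT.1 (mem_orderLT_of_rightMul_mem (D := D) hm hunit (r := -h i) ?_) i n (by simp)
  exact hq ▸ zero_mem _

lemma orderLT_sup_range_rightMul :
    orderLT F N 0 ⊔ LinearMap.range (rightMul D m) = ⊤ := by
  refine eq_top_iff.2 fun p _ ↦ ?_
  obtain ⟨k, hk⟩ := exists_mem_orderLT N 0 p
  rw [zero_add] at hk
  induction k generalizing p with
  | zero => exact Submodule.mem_sup_left hk
  | succ k ih =>
    obtain ⟨c, hc⟩ := Matrix.vecMul_surjective_iff_isUnit.2 hunit (symbol N k p)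
    obtain ⟨q, hq, hqc⟩ := exists_mem_orderLT_symbol_eq h k c
    have hlt : p - rightMul D m q ∈ orderLT F N k := by
      refine mem_orderLT_of_symbol_eq_zero (sub_mem hk (rightMul_mem_orderLT hm hq)) ?_
      rw [map_sub, symbol_rightMul hm hq, hqc, sub_eq_zero]
      exact hc.symm
    rw [← sub_add_cancel p (rightMul D m q)]
    exact add_mem (ih _ trivial hlt) (Submodule.mem_sup_right ⟨q, rfl⟩)

lemma orderLT_inf_range_rightMul :
    orderLT F N 0 ⊓ LinearMap.range (rightMul D m) = (orderLT F h 0).map (rightMul D m) := by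
  refine le_antisymm ?_ (le_inf (Submodule.map_le_iff_le_comap.2 fun q ↦ rightMul_mem_orderLT hm)
    LinearMap.map_le_range)
  rintro _ ⟨hp, q, rfl⟩
  exact ⟨q, mem_orderLT_of_rightMul_mem hm hunit hp, rfl⟩

lemma finite_ker_dualMap_rightMul : Module.Finite F (LinearMap.ker (rightMul D m).dualMap) :=
  finite_ker_dualMap_of_sup_range_eq_top (orderLT_sup_range_rightMul hm hunit)

lemma finrank_ker_dualMap_rightMul_add :
    finrank F (LinearMap.ker (rightMul D m).dualMap) + ∑ i, h i = ∑ j, N j := by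
  rw [← finrank_orderLT_zero (F := F) N, ← finrank_orderLT_zero (F := F) h,
    ← finrank_ker_dualMap_add_finrank_inf (orderLT_sup_range_rightMul (D := D) hm hunit),
    orderLT_inf_range_rightMul hm hunit,
    (Submodule.equivMapOfInjective _ (rightMul_injective (D := D) hm hunit) _).finrank_eq]

lemma rank_ker_dualMap_rightMul : Module.rank F (LinearMap.ker (rightMul D m).dualMap) =
    ((∑ j, ((N j : ℤ) - h j)).toNat : Cardinal) := by
  have := finite_ker_dualMap_rightMul (D := D) hm hunit
  have hadd := finrank_ker_dualMap_rightMul_add (D := D) hm hunit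
  rw [← finrank_eq_rank, Nat.cast_inj, Finset.sum_sub_distrib]
  zify at hadd
  lia

end InvertibleLeadingMatrix

section OperatorRow

variable {F ι : Type*} [Field F] [Fintype ι] {N : ι → ℕ} {a : ι → ℕ → F}

/-- The row operator in `F[∂]^ι` with `j`-th component `∑ a j n ∂ⁿ`, the sum being over
`n ≤ N j`. -/
noncomputable def operatorRow (N : ι → ℕ) (a : ι → ℕ → F) : ι × ℕ →₀ F :=
  ∑ j, ∑ n ∈ Finset.range (N j + 1), single (j, n) (a j n)

lemma operatorRow_apply (j : ι) (n : ℕ) :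
    operatorRow N a (j, n) = if n ≤ N j then a j n else 0 := by
  classical
  simp [operatorRow, Finsupp.finsetSum_apply, single_apply, Prod.ext_iff, ite_and]

lemma linearCombination_operatorRow {V : Type*} [AddCommGroup V] [Module F V] (v : ι × ℕ → V) :
    linearCombination F v (operatorRow N a) =
      ∑ j, ∑ n ∈ Finset.range (N j + 1), a j n • v (j, n) := by
  simp [operatorRow]

lemma operatorRow_mem_orderLT {k : ℕ} (ha : ∀ j (n : ℕ), (N j : ℤ) - k < n → a j n = 0) :
    operatorRow N a ∈ orderLT F N (1 - k) :=
  mem_orderLT.2 fun j n hn ↦ by rw [operatorRow_apply, ha j n (by lia), ite_self]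

lemma symbol_operatorRow (k : ℕ) (j : ι) :
    symbol N (-k) (operatorRow N a) j = if k ≤ N j then a j (N j - k) else 0 := by
  split_ifs with hk
  · rw [symbol_apply_of_eq (n := N j - k) (by lia), operatorRow_apply, if_pos (by lia)]
  · exact symbol_apply_of_neg (by lia) _

lemma matrixOperator_operatorRow {C ι' : Type*} [Field C] [Algebra C F] (D : Derivation C F F)
    (a : ι' → ι → ℕ → F) (u : ι → F) (i : ι') :
    matrixOperator D (fun i ↦ operatorRow N (a i)) u i =
      ∑ j, ∑ n ∈ Finset.range (N j + 1), a i j n * D^[n] (u j) :=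
  linearCombination_operatorRow _

end OperatorRow

/-- The derivation `d`, as a derivation over a subfield `C` of its constants. -/
def IsDerivation.toDerivation {F : Type*} [Field F] {d : F → F} (hd : IsDerivation d)
    (C : Subfield F) (hC : ∀ x ∈ C, d x = 0) : Derivation C F F :=
  .mk'
    { toFun := d
      map_add' := hd.map_add
      map_smul' c x := by simp [Subfield.smul_def, hd.leibniz, hC] }
    fun x y ↦ by simp [hd.leibniz, mul_comm, add_comm]

theorem stmt_3_general {F ι : Type*} [Field F] [Fintype ι] [DecidableEq ι] {d : F → F}
    (hd : IsDerivation d) (C : Subfield F) (hC : ∀ x : F, x ∈ C ↔ d x = 0)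
    (N h : ι → ℕ) (a : ι → ι → ℕ → F)
    (hmaj : ∀ i j (n : ℕ), (N j : ℤ) - (h i : ℤ) < (n : ℤ) → a i j n = 0)
    (Abar : Matrix ι ι F)
    (hAbar : ∀ i j, Abar i j = if h i ≤ N j then a i j (N j - h i) else 0)
    (hinv : IsUnit Abar)
    (S : Submodule C (ι → F))
    (hS : ∀ u : ι → F, u ∈ S ↔
      ∀ i, ∑ j, ∑ n ∈ Finset.range (N j + 1), a i j n * d^[n] (u j) = 0) :
    Module.rank C S ≤ ((∑ j, ((N j : ℤ) - (h j : ℤ))).toNat : Cardinal) ∧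
    (LinearlyClosed d →
      (∀ b : ι → F, ∃ u : ι → F,
        ∀ i, ∑ j, ∑ n ∈ Finset.range (N j + 1), a i j n * d^[n] (u j) = b i) ∧
      Module.rank C S = ((∑ j, ((N j : ℤ) - (h j : ℤ))).toNat : Cardinal)) := by
  let D : Derivation C F F := hd.toDerivation C fun x hx ↦ (hC x).1 hx
  let m (i : ι) : ι × ℕ →₀ F := operatorRow N (a i)
  have hconst (x : F) (hx : D x = 0) : x ∈ Set.range (algebraMap C F) := ⟨⟨x, (hC x).2 hx⟩, rfl⟩
  have hM (u : ι → F) (i : ι) : matrixOperator D m u i =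
      ∑ j, ∑ n ∈ Finset.range (N j + 1), a i j n * d^[n] (u j) :=
    matrixOperator_operatorRow D a u i
  have hm (i : ι) : m i ∈ orderLT F N (1 - h i) := operatorRow_mem_orderLT (hmaj i)
  have hlead : leadingMatrix N h m = Abar :=
    Matrix.ext fun i j ↦ (symbol_operatorRow (h i) j).trans (hAbar i j).symm
  have hunit : IsUnit (leadingMatrix N h m) := hlead ▸ hinv
  have hker : S = LinearMap.ker (matrixOperator D m) := by
    ext u
    simp [hS, funext_iff, hM]
  have hfin : Module.Finite F (LinearMap.ker (rightMul D m).dualMap) :=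
    finite_ker_dualMap_rightMul hm hunit
  rw [hker, ← rank_ker_dualMap_rightMul (D := D) hm hunit]
  refine ⟨rank_ker_matrixOperator_le hconst, fun hcl ↦ ⟨fun b ↦ ?_, ?_⟩⟩
  · obtain ⟨u, hu⟩ := surjective_matrixOperator (D := D) hcl (rightMul_injective hm hunit) b
    exact ⟨u, fun i ↦ (hM u i).symm.trans (congr_fun hu i)⟩
  · exact rank_ker_matrixOperator_eq hconst hcl

/-- Let `M(∂)` be an `ℓ×ℓ` matrix differential operator, `(Mu)_i = Σ_j Σ_n a_{ij,n} ∂^n u_j`,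
with a majorant `{N_j; h_i}` (i.e. `a_{ij,n} = 0` whenever `n > N_j − h_i`) whose
leading matrix `Ā` (with `ā_{ij} = a_{ij, N_j − h_i}`, or `0` if `N_j − h_i < 0`) is
invertible.  Then the solutions of `Mu = 0` form a `C`-subspace of `F^ℓ` of dimension at
most `d = Σ_j (N_j − h_j)`; and if `F` is linearly closed, `M` is surjective and the
dimension equals `d`. -/
theorem stmt_3 (F : Type*) [Field F] [CharZero F] (d : F → F) (hd : IsDerivation d)
    (C : Subfield F) (hC : ∀ x : F, x ∈ C ↔ d x = 0)
    (l : ℕ) (N h : Fin l → ℕ) (a : Fin l → Fin l → ℕ → F)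
    (hmaj : ∀ i j (n : ℕ), (N j : ℤ) - (h i : ℤ) < (n : ℤ) → a i j n = 0)
    (Abar : Matrix (Fin l) (Fin l) F)
    (hAbar : ∀ i j, Abar i j = if h i ≤ N j then a i j (N j - h i) else 0)
    (hinv : IsUnit Abar)
    (S : Submodule C (Fin l → F))
    (hS : ∀ u : Fin l → F, u ∈ S ↔
      ∀ i, ∑ j, ∑ n ∈ Finset.range (N j + 1), a i j n * d^[n] (u j) = 0) :
    Module.rank C S ≤ ((∑ j, ((N j : ℤ) - (h j : ℤ))).toNat : Cardinal) ∧
    (LinearlyClosed d →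
      (∀ b : Fin l → F, ∃ u : Fin l → F,
        ∀ i, ∑ j, ∑ n ∈ Finset.range (N j + 1), a i j n * d^[n] (u j) = b i) ∧
      Module.rank C S = ((∑ j, ((N j : ℤ) - (h j : ℤ))).toNat : Cardinal)) :=
  stmt_3_general hd C hC N h a hmaj Abar hAbar hinv S hS
end

section
/- Let F be a linearly closed differential field of characteristic zero with constants C = {c ∈ F : ∂c = 0}, and let K : F^ℓ → F^ℓ be an ℓ×ℓ matrix differential operator of order N with invertible leading coefficient K_N = (K_{ij,N})_{i,j} ∈ Mat_{ℓ×ℓ}(F). Then the set of coefficient families (P_{ij,n}) with 1 ≤ i,j ≤ ℓ and 0 ≤ n ≤ N−1 such that the matrix differential operator P(u)_i = Σ_{j,n} P_{ij,n} ∂^n u_j (of order at most N−1) makes K∘P selfadjoint, i.e., K(P(u)) = P*(K*(u)) for all u ∈ F^ℓ, is a C-vector subspace of F^{ℓ²N} of dimension binom(Nℓ, 2). -/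
/-- The `ℓ×ℓ` matrix differential operator `(Au)_i = Σ_j Σ_{n=0}^M A_{ij,n} d^n (u j)`. -/
noncomputable def matOp {F : Type*} [Field F] (d : F → F) {l : ℕ} (M : ℕ)
    (A : Fin l → Fin l → ℕ → F) (u : Fin l → F) : Fin l → F :=
  fun i => ∑ j, ∑ n ∈ Finset.range (M + 1), A i j n * d^[n] (u j)

/-- The formal adjoint `(A*u)_i = Σ_j Σ_{n=0}^M (−1)^n d^n (A_{ji,n} u_j)`. -/
noncomputable def matOpAdj {F : Type*} [Field F] (d : F → F) {l : ℕ} (M : ℕ)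
    (A : Fin l → Fin l → ℕ → F) (u : Fin l → F) : Fin l → F :=
  fun i => ∑ j, ∑ n ∈ Finset.range (M + 1), (-1 : F) ^ n * d^[n] (A j i n * u j)

/-!
Lagrange's identity attaches to `K` a bracket with `d [x, u] = u ⬝ᵥ K x - K* u ⬝ᵥ x`, which
restricts to a perfect pairing of `ker K` and `ker K*`, both of dimension `Nℓ` over the constants.
If `K ∘ P` is selfadjoint, then `P` maps `ker K*` to `ker K`, so that `P (w α) = ∑ β, c α β • v β`
for dual bases `v` and `w` and a matrix of constants `c`; as `P` has order less than `N`, it is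
determined by `c`. The brackets of `K` and `P` combine to primitives `e γ` of
`w γ ⬝ᵥ (K (P u) - P* (K* u))` with `∑ γ, e γ • v γ = ∑ α, [v α, u] • ∑ β, (c + cᵀ) α β • v β`.

If `K ∘ P` is selfadjoint, the `e γ` are constants, so each coordinate of the right-hand side takes
values in the span of the coordinates of the `v γ` over the constants, which is finite-dimensional;
being a differential functional of `u`, it vanishes, since nonzero differential functionals are
surjective. Hence `c` is skew-symmetric. Conversely, if `c` is skew-symmetric, then
`∑ γ, e γ • v γ = 0`, and successive derivatives of this relation force `e = 0` and
`K (P u) = P* (K* u)`.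
-/

open Finset Matrix Module

section Derivation

variable {F : Type*} [Field F] {d : F → F}

namespace IsDerivation

/-- A derivation as a bundled additive map. -/
def toAddMonoidHom (hd : IsDerivation d) : F →+ F := AddMonoidHom.mk' d hd.map_add

protected theorem map_zero (hd : IsDerivation d) : d 0 = 0 := _root_.map_zero hd.toAddMonoidHom

protected theorem map_neg (hd : IsDerivation d) (a : F) : d (-a) = -d a :=
  _root_.map_neg hd.toAddMonoidHom a

protected theorem map_sum (hd : IsDerivation d) {ι : Type*} (s : Finset ι) (f : ι → F) :
    d (∑ i ∈ s, f i) = ∑ i ∈ s, d (f i) :=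
  _root_.map_sum hd.toAddMonoidHom f s

protected theorem map_one (hd : IsDerivation d) : d 1 = 0 := by
  simpa using hd.leibniz 1 1

theorem iterate_zero (hd : IsDerivation d) (n : ℕ) : d^[n] 0 = 0 :=
  iterate_map_zero hd.toAddMonoidHom n

theorem iterate_sum (hd : IsDerivation d) (n : ℕ) {ι : Type*} (s : Finset ι) (f : ι → F) :
    d^[n] (∑ i ∈ s, f i) = ∑ i ∈ s, d^[n] (f i) := by
  have h := _root_.map_sum ((show AddMonoid.End F from hd.toAddMonoidHom) ^ n) f s
  rwa [AddMonoid.End.coe_pow] at h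

theorem map_const_mul (hd : IsDerivation d) {c : F} (hc : d c = 0) (a : F) :
    d (c * a) = c * d a := by
  rw [hd.leibniz, hc, zero_mul, zero_add]

theorem iterate_const_mul (hd : IsDerivation d) {c : F} (hc : d c = 0) (n : ℕ) (a : F) :
    d^[n] (c * a) = c * d^[n] a :=
  ((show Function.Commute d (c * ·) from hd.map_const_mul hc).iterate_left n) a

theorem map_neg_one_pow_mul (hd : IsDerivation d) (n : ℕ) (a : F) :
    d ((-1) ^ n * a) = (-1) ^ n * d a := by
  rcases neg_one_pow_eq_or F n with h | h <;> simp [h, hd.map_neg]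

theorem map_dotProduct (hd : IsDerivation d) {ι : Type*} [Fintype ι] (x y : ι → F) :
    d (x ⬝ᵥ y) = (d ∘ x) ⬝ᵥ y + x ⬝ᵥ (d ∘ y) := by
  simp only [dotProduct, hd.map_sum, hd.leibniz, sum_add_distrib, Function.comp_apply]

end IsDerivation

theorem LinearlyClosed.surjective_s9 (hlc : LinearlyClosed d) : Function.Surjective d := fun b => by
  obtain ⟨u, hu⟩ := (hlc 1 (Pi.single 1 1) (by simp)).1 b
  exact ⟨u, by simpa [sum_range_succ] using hu⟩

/-- The tails of Horner's scheme for the adjoint: `∑_{k ≤ N - n} (-1)^k d^k (b_{n+k})`.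
At `n = 0` this is the adjoint of `∑_{n ≤ N} b_n d^n` applied to `1`, and the tails with `n ≥ 1`
are the coefficients of the concomitant of Lagrange's identity. -/
def adjTail (d : F → F) (N : ℕ) (b : ℕ → F) (n : ℕ) : F :=
  ∑ k ∈ range (N + 1 - n), (-1) ^ k * d^[k] (b (n + k))

theorem adjTail_succ_self (N : ℕ) (b : ℕ → F) : adjTail d N b (N + 1) = 0 := by
  simp [adjTail]

theorem adjTail_eq_sub (hd : IsDerivation d) {N : ℕ} (b : ℕ → F) {n : ℕ} (hn : n ≤ N) :
    adjTail d N b n = b n - d (adjTail d N b (n + 1)) := by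
  simp only [adjTail, show N + 1 - n = N + 1 - (n + 1) + 1 by lia, sum_range_succ', hd.map_sum,
    hd.map_neg_one_pow_mul, ← Function.iterate_succ_apply', pow_succ, add_right_comm n 1]
  simp [add_comm, sub_eq_add_neg, add_assoc]

theorem adjTail_self (hd : IsDerivation d) (N : ℕ) (b : ℕ → F) : adjTail d N b N = b N := by
  rw [adjTail_eq_sub hd b le_rfl, adjTail_succ_self, hd.map_zero, sub_zero]

end Derivation

section Connection

variable {F : Type*} [Field F] {d : F → F} {V : Type*} [AddCommGroup V] [Module F V] {D : V →+ V}

/-- A connection on an `F`-vector space over the differential field `(F, d)`: an additive map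
satisfying the Leibniz rule `D (a x) = (d a) x + a D x`. -/
structure IsConnection_s9 (d : F → F) (D : V →+ V) : Prop where
  leibniz : ∀ (a : F) (x : V), D (a • x) = d a • x + a • D x

/-- Lagrange's identity. -/
theorem IsConnection_s9.map_sum_adjTail_smul (hD : IsConnection_s9 d D) (hd : IsDerivation d) (N : ℕ)
    (b : ℕ → F) {e : ℕ → V} (he : ∀ n, D (e n) = e (n + 1)) :
    D (∑ n ∈ range N, adjTail d N b (n + 1) • e n)
      = ∑ n ∈ range (N + 1), b n • e n - adjTail d N b 0 • e 0 := by
  have hstep : ∀ n ∈ range N, D (adjTail d N b (n + 1) • e n)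
      = b n • e n + (adjTail d N b (n + 1) • e (n + 1) - adjTail d N b n • e n) := fun n hn => by
    rw [hD.leibniz, he, adjTail_eq_sub hd b (mem_range.1 hn).le]
    module
  rw [map_sum, sum_congr rfl hstep, sum_add_distrib,
    sum_range_sub fun n => adjTail d N b n • e n, adjTail_self hd, sum_range_succ]
  abel

theorem IsDerivation.isConnection (hd : IsDerivation d) : IsConnection_s9 d hd.toAddMonoidHom :=
  ⟨hd.leibniz⟩

end Connection

section DifferentialFunctional

variable {F : Type*} [Field F] {d : F → F} {ι : Type*}

/-- The derivatives of order less than `N` of the components of `u`. -/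
def jet (d : F → F) (N : ℕ) (u : ι → F) : Fin N × ι → F := fun x => d^[x.1] (u x.2)

/-- The linear differential functionals `u ↦ ∑_i ∑_{n < k} c_{n,i} d^n u_i` of order less
than `k`. -/
def diffFunctional (d : F → F) (ι : Type*) (k : ℕ) : Submodule F ((ι → F) → F) :=
  Submodule.span F (Set.range fun (x : Fin k × ι) u => jet d k u x)

theorem mem_diffFunctional_iff [Fintype ι] {k : ℕ} {φ : (ι → F) → F} :
    φ ∈ diffFunctional d ι k ↔ ∃ c : Fin k × ι → F, ∀ u, φ u = c ⬝ᵥ jet d k u := by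
  simp only [diffFunctional, Submodule.mem_span_range_iff_exists_fun, funext_iff,
    Finset.sum_apply, Pi.smul_apply, smul_eq_mul, dotProduct, eq_comm]

theorem iterate_apply_mem_diffFunctional {n k : ℕ} (h : n < k) (i : ι) :
    (fun u => d^[n] (u i)) ∈ diffFunctional d ι k :=
  Submodule.subset_span ⟨(⟨n, h⟩, i), rfl⟩

theorem diffFunctional_mono {k m : ℕ} (h : k ≤ m) :
    diffFunctional d ι k ≤ diffFunctional d ι m := by
  rw [diffFunctional, Submodule.span_le]
  rintro _ ⟨x, rfl⟩
  exact iterate_apply_mem_diffFunctional (x.1.2.trans_le h) x.2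

theorem deriv_mem_diffFunctional (hd : IsDerivation d) {k : ℕ} {φ : (ι → F) → F}
    (hφ : φ ∈ diffFunctional d ι k) : (fun u => d (φ u)) ∈ diffFunctional d ι (k + 1) := by
  induction hφ using Submodule.span_induction with
  | mem _ h =>
    obtain ⟨x, rfl⟩ := h
    simp only [jet, ← Function.iterate_succ_apply']
    exact iterate_apply_mem_diffFunctional (Nat.succ_lt_succ x.1.2) x.2
  | zero => simp only [Pi.zero_apply, hd.map_zero]; exact zero_mem _
  | add φ ψ _ _ hφ hψ => simp only [Pi.add_apply, hd.map_add]; exact add_mem hφ hψ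
  | smul a φ hmem hφ =>
    simp only [Pi.smul_apply, smul_eq_mul, hd.leibniz]
    exact add_mem (Submodule.smul_mem _ (d a) (diffFunctional_mono k.le_succ hmem))
      (Submodule.smul_mem _ a hφ)

theorem iterate_deriv_mem_diffFunctional (hd : IsDerivation d) {k : ℕ} {φ : (ι → F) → F}
    (hφ : φ ∈ diffFunctional d ι k) (j : ℕ) :
    (fun u => d^[j] (φ u)) ∈ diffFunctional d ι (k + j) := by
  induction j with
  | zero => exact hφ
  | succ j ih =>
    simp only [Function.iterate_succ_apply', ← add_assoc]
    exact deriv_mem_diffFunctional hd ih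

end DifferentialFunctional

section Horizontal

variable {F : Type*} [Field F] {d : F → F} {V : Type*} [AddCommGroup V] [Module F V] {D : V →+ V}

theorem LinearlyClosed.exists_ne_zero_iterate_add_eq_zero (hlc : LinearlyClosed d) {m : ℕ}
    (hm : 1 ≤ m) {a : F} (ha : a ≠ 0) {φ : (Unit → F) → F} (hφ : φ ∈ diffFunctional d Unit m) :
    ∃ u : F, u ≠ 0 ∧ a * d^[m] u + φ (fun _ => u) = 0 := by
  obtain ⟨c, hc⟩ := mem_diffFunctional_iff.1 hφ
  let b : ℕ → F := fun n => if h : n < m then c (⟨n, h⟩, ()) else a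
  obtain ⟨u, hu, hbu⟩ := (hlc m b (by simpa [b])).2 hm
  refine ⟨u, hu, ?_⟩
  rw [← hbu, hc, sum_range_succ, sum_range, add_comm]
  simp [b, dotProduct, jet, Fintype.sum_prod_type]

theorem exists_notMem_span_and_eq_sum [FiniteDimensional F V] (e : ℕ → V) (he : e 0 ≠ 0) :
    ∃ (m : ℕ) (a : ℕ → F), e m ∉ Submodule.span F (e '' Set.Iio m) ∧
      e (m + 1) = ∑ n ∈ range (m + 1), a n • e n := by
  classical
  have hdep : ∃ k, e k ∈ Submodule.span F (e '' Set.Iio k) := by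
    let W : ℕ →o Submodule F V := ⟨fun k => Submodule.span F (e '' Set.Iio k), fun _ _ h =>
      Submodule.span_mono (Set.image_mono (Set.Iio_subset_Iio h))⟩
    obtain ⟨k, hk⟩ := WellFoundedGT.monotone_chain_condition W
    refine ⟨k, show e k ∈ W k from ?_⟩
    rw [hk (k + 1) k.le_succ]
    exact Submodule.subset_span ⟨k, k.lt_succ_self, rfl⟩
  obtain ⟨m, hm⟩ := Nat.exists_eq_succ_of_ne_zero (n := Nat.find hdep) fun h0 => he <| by
    simpa [h0] using Nat.find_spec hdep
  have hmem : e (m + 1) ∈ Submodule.span F (Set.range (e ∘ Fin.val (n := m + 1))) := by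
    rw [Set.range_comp, Fin.range_val]
    simpa only [hm] using Nat.find_spec hdep
  obtain ⟨a, ha⟩ := Submodule.mem_span_range_iff_exists_fun F |>.1 hmem
  refine ⟨m, fun n => a (Fin.ofNat (m + 1) n), Nat.find_min hdep (hm ▸ m.lt_succ_self), ?_⟩
  rw [← ha, sum_range]
  simp only [Fin.ofNat_val_eq_self, Function.comp_apply]

/-- The horizontal vector is sought in the span of the `D^n x`; Lagrange's identity reduces
horizontality to a single homogeneous scalar equation. -/
theorem IsConnection_s9.exists_ne_zero_map_eq_zero [FiniteDimensional F V] [Nontrivial V]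
    (hD : IsConnection_s9 d D) (hd : IsDerivation d) (hlc : LinearlyClosed d) :
    ∃ y : V, y ≠ 0 ∧ D y = 0 := by
  obtain ⟨x, hx⟩ := exists_ne (0 : V)
  let e : ℕ → V := fun n => D^[n] x
  obtain ⟨m, a, hm, hrel⟩ := exists_notMem_span_and_eq_sum (F := F) e hx
  let b : F → ℕ → F := fun g n => if n = m + 1 then g else -a n * g
  have hlow : (∑ k ∈ range (m + 1), fun u : Unit → F => (-1) ^ k * d^[k] (-a k * u ())) ∈
      diffFunctional d Unit (m + 1) := by
    refine sum_mem fun k hk => diffFunctional_mono (mem_range.1 hk) ?_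
    rw [Nat.succ_eq_add_one, add_comm]
    exact Submodule.smul_mem _ _ <| iterate_deriv_mem_diffFunctional hd
      (Submodule.smul_mem _ (-a k) (iterate_apply_mem_diffFunctional zero_lt_one ())) k
  obtain ⟨g, hg, hg0⟩ := hlc.exists_ne_zero_iterate_add_eq_zero (Nat.le_add_left 1 m)
    (pow_ne_zero (m + 1) (neg_ne_zero.2 one_ne_zero)) hlow
  have hT0 : adjTail d (m + 1) (b g) 0 = 0 := by
    rw [← hg0, adjTail, Nat.sub_zero, sum_range_succ, add_comm, Finset.sum_apply]
    simp only [b, zero_add, if_pos]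
    congr 1
    exact sum_congr rfl fun k hk => by rw [if_neg (mem_range.1 hk).ne]
  refine ⟨∑ n ∈ range (m + 1), adjTail d (m + 1) (b g) (n + 1) • e n, fun hy => hm ?_, ?_⟩
  · rw [sum_range_succ, adjTail_self hd, add_eq_zero_iff_eq_neg'] at hy
    rw [← Submodule.smul_mem_iff _ hg]
    simp only [b, if_pos] at hy
    rw [hy]
    exact neg_mem <| sum_mem fun n hn => Submodule.smul_mem _ _ <|
      Submodule.subset_span ⟨n, mem_range.1 hn, rfl⟩
  · have hb : ∑ n ∈ range (m + 1 + 1), b g n • e n = 0 := by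
      rw [sum_range_succ, hrel, smul_sum, ← sum_add_distrib]
      refine sum_eq_zero fun n hn => ?_
      simp only [b, if_pos, if_neg (mem_range.1 hn).ne]
      module
    rw [hD.map_sum_adjTail_smul hd _ _ fun n => (Function.iterate_succ_apply' D n x).symm, hb, hT0,
      zero_smul, sub_zero]

theorem IsConnection_s9.map_mem_span (hD : IsConnection_s9 d D) {y : V}
    (hy : y ∈ Submodule.span F {y | D y = 0}) : D y ∈ Submodule.span F {y | D y = 0} := by
  induction hy using Submodule.closure_induction with
  | zero => exact (map_zero D).symm ▸ zero_mem _
  | add x y _ _ hx hy => exact (map_add D x y).symm ▸ add_mem hx hy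
  | smul_mem a y hy =>
    rw [hD.leibniz, show D y = 0 from hy, smul_zero, add_zero]
    exact Submodule.smul_mem _ _ (Submodule.subset_span hy)

theorem IsConnection_s9.exists_map_eq_of_mem_span (hD : IsConnection_s9 d D)
    (hsurj : Function.Surjective d) {y : V} (hy : y ∈ Submodule.span F {y | D y = 0}) :
    ∃ z ∈ Submodule.span F {y | D y = 0}, D z = y := by
  induction hy using Submodule.closure_induction with
  | zero => exact ⟨0, zero_mem _, map_zero D⟩
  | add _ _ _ _ hx hy =>
    obtain ⟨x, hx, rfl⟩ := hx
    obtain ⟨y, hy, rfl⟩ := hy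
    exact ⟨x + y, add_mem hx hy, map_add D x y⟩
  | smul_mem a y hy =>
    obtain ⟨b, rfl⟩ := hsurj a
    refine ⟨b • y, Submodule.smul_mem _ _ (Submodule.subset_span hy), ?_⟩
    rw [hD.leibniz, show D y = 0 from hy, smul_zero, add_zero]

theorem IsConnection_s9.quotient (hD : IsConnection_s9 d D) {H : Submodule F V}
    (hH : H.toAddSubgroup ≤ H.toAddSubgroup.comap D) :
    IsConnection_s9 (V := V ⧸ H) d (QuotientAddGroup.map H.toAddSubgroup H.toAddSubgroup D hH) where
  leibniz := by
    rintro a ⟨x⟩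
    exact congr_arg (Submodule.Quotient.mk (p := H)) (hD.leibniz a x)

theorem IsConnection_s9.span_map_eq_zero_eq_top [FiniteDimensional F V] (hD : IsConnection_s9 d D)
    (hd : IsDerivation d) (hlc : LinearlyClosed d) : Submodule.span F {y | D y = 0} = ⊤ := by
  set H := Submodule.span F {y | D y = 0}
  by_contra hne
  have := Submodule.Quotient.nontrivial_iff.2 hne
  obtain ⟨y, hy0, hy⟩ := (hD.quotient (H := H) fun y hy => hD.map_mem_span hy)
    |>.exists_ne_zero_map_eq_zero hd hlc
  obtain ⟨y, rfl⟩ := H.mkQ_surjective y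
  have hDy : D y ∈ H := (Submodule.Quotient.mk_eq_zero H).1 hy
  obtain ⟨z, hz, hzy⟩ := hD.exists_map_eq_of_mem_span hlc.surjective_s9 hDy
  have hyz : y - z ∈ H := Submodule.subset_span (by simp [hzy])
  exact hy0 <| (Submodule.Quotient.mk_eq_zero H).2 <| (Submodule.sub_mem_iff_left H hz).1 hyz

theorem IsConnection_s9.exists_basis_map_eq_zero [FiniteDimensional F V] {ι : Type*}
    (b : Basis ι F V) (hD : IsConnection_s9 d D) (hd : IsDerivation d) (hlc : LinearlyClosed d) :
    ∃ y : Basis ι F V, ∀ i, D (y i) = 0 := by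
  have hspan := (hD.span_map_eq_zero_eq_top hd hlc).ge
  let y := Basis.ofSpan hspan
  refine ⟨y.reindex (y.indexEquiv b), fun i => ?_⟩
  rw [Basis.reindex_apply]
  exact Basis.ofSpan_subset hspan (Set.mem_range_self _)

end Horizontal

section FiniteDimensionalRange

variable {F : Type*} [Field F] {d : F → F} {C : Subfield F}

/-- A derivation as a linear map over its field of constants. -/
def IsDerivation.toLinearMap (hd : IsDerivation d) (hC : ∀ x, x ∈ C ↔ d x = 0) : F →ₗ[C] F where
  toFun := d
  map_add' := hd.map_add
  map_smul' c a := hd.map_const_mul ((hC c).1 c.2) a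

theorem LinearlyClosed.not_finiteDimensional (hlc : LinearlyClosed d) (hd : IsDerivation d)
    (hC : ∀ x, x ∈ C ↔ d x = 0) : ¬ FiniteDimensional C F := fun _ =>
  have hinj : Function.Injective (hd.toLinearMap hC) :=
    LinearMap.injective_iff_surjective.2 hlc.surjective_s9
  one_ne_zero (hinj (hd.map_one.trans hd.map_zero.symm))

theorem LinearlyClosed.exists_sum_mul_iterate_eq (hlc : LinearlyClosed d) {k : ℕ} {c : Fin k → F}
    (hc : c ≠ 0) (b : F) : ∃ u, ∑ n, c n * d^[n] u = b := by
  induction k with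
  | zero => exact absurd (Subsingleton.elim c 0) hc
  | succ k ih =>
    by_cases hlast : c (Fin.last k) = 0
    · obtain ⟨u, hu⟩ := ih (c := c ∘ Fin.castSucc) fun h => hc <| funext <|
        Fin.lastCases hlast (congr_fun h)
      exact ⟨u, by simpa [Fin.sum_univ_castSucc, hlast] using hu⟩
    · have hlead : (c ∘ Fin.ofNat (k + 1)) k ≠ 0 := by simpa [Fin.ofNat_eq_cast] using hlast
      obtain ⟨u, hu⟩ := (hlc k _ hlead).1 b
      exact ⟨u, by simpa [sum_range] using hu⟩

theorem eq_zero_of_mem_diffFunctional_of_forall_mem (hlc : LinearlyClosed d) (hd : IsDerivation d)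
    (hC : ∀ x, x ∈ C ↔ d x = 0) {ι : Type*} [Finite ι] {k : ℕ} {φ : (ι → F) → F}
    (hφ : φ ∈ diffFunctional d ι k) (H : Submodule C F) [FiniteDimensional C H]
    (hH : ∀ u, φ u ∈ H) : φ = 0 := by
  classical
  have := Fintype.ofFinite ι
  obtain ⟨c, hc⟩ := mem_diffFunctional_iff.1 hφ
  by_contra hne
  obtain ⟨i, hi⟩ : ∃ i, (fun n => c (n, i)) ≠ 0 := by
    by_contra! h
    exact hne <| funext fun u => by simp [hc, show c = 0 from funext fun x => congr_fun (h x.2) x.1]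
  have htop : H = ⊤ := Submodule.eq_top_iff'.2 fun b => by
    obtain ⟨f, rfl⟩ := hlc.exists_sum_mul_iterate_eq hi b
    convert hH (Pi.single i f) using 1
    rw [hc, dotProduct, Fintype.sum_prod_type]
    refine sum_congr rfl fun n _ => ?_
    rw [sum_eq_single i (fun j _ hj => ?_) (by simp)]
    · simp [jet]
    · simp [jet, hj, hd.iterate_zero]
  subst htop
  exact hlc.not_finiteDimensional hd hC Submodule.topEquiv.finiteDimensional

end FiniteDimensionalRange

section Fundamental

variable {F : Type*} [Field F] {d : F → F}

theorem exists_isUnit_map_eq_mul (hd : IsDerivation d) (hlc : LinearlyClosed d) {ι : Type*}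
    [Fintype ι] [DecidableEq ι] (A : Matrix ι ι F) :
    ∃ Y : Matrix ι ι F, IsUnit Y ∧ Y.map d = A * Y := by
  let D : (ι → F) →+ (ι → F) := hd.toAddMonoidHom.compLeft ι - A.mulVecLin.toAddMonoidHom
  have hDapply : ∀ y i, D y i = d (y i) - (A *ᵥ y) i := fun _ _ => rfl
  have hD : IsConnection_s9 d D := ⟨fun a y => funext fun i => by
    simp only [hDapply, Pi.add_apply, Pi.smul_apply, smul_eq_mul, hd.leibniz, mulVec_smul]
    ring⟩
  obtain ⟨y, hy⟩ := hD.exists_basis_map_eq_zero (Pi.basisFun F ι) hd hlc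
  refine ⟨(Pi.basisFun F ι).toMatrix y, ?_, ?_⟩
  · have := (Pi.basisFun F ι).invertibleToMatrix y
    exact isUnit_of_invertible _
  · ext i α
    exact sub_eq_zero.1 ((hDapply (y α) i).symm.trans (congr_fun (hy α) i))

end Fundamental

section Companion

variable {F : Type*} [Field F] {d : F → F} {l M : ℕ}

/-- The matrix coefficient of `d^n` in the operator with coefficients `K`. -/
def coeffMatrix (K : Fin l → Fin l → ℕ → F) (n : ℕ) : Matrix (Fin l) (Fin l) F :=
  Matrix.of fun i j => K i j n

/-- The coefficients of order less than `N`, as a matrix acting on jets. -/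
def lowerCoeff (N : ℕ) (K : Fin l → Fin l → ℕ → F) : Matrix (Fin l) (Fin N × Fin l) F :=
  Matrix.of fun i x => K i x.2 x.1

/-- The matrix whose columns are the jets of the vectors `v α` (a Wronskian matrix). -/
def jetMatrix {ι κ : Type*} (d : F → F) (N : ℕ) (v : κ → ι → F) : Matrix (Fin N × ι) κ F :=
  Matrix.of fun x α => jet d N (v α) x

theorem matOp_eq_add (N : ℕ) (K : Fin l → Fin l → ℕ → F) (u : Fin l → F) :
    matOp d N K u = coeffMatrix K N *ᵥ (d^[N] ∘ u) + lowerCoeff N K *ᵥ jet d N u := by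
  ext i
  simp only [matOp, sum_range_succ, sum_add_distrib, Pi.add_apply, mulVec, dotProduct,
    coeffMatrix, lowerCoeff, jet, of_apply, Function.comp_apply, Fintype.sum_prod_type_right,
    sum_range]
  exact add_comm _ _

theorem matOp_eq_zero_iff {N : ℕ} {K : Fin l → Fin l → ℕ → F} (hK : IsUnit (coeffMatrix K N))
    {u : Fin l → F} : matOp d N K u = 0 ↔
      d^[N] ∘ u = -(((coeffMatrix K N)⁻¹ * lowerCoeff N K) *ᵥ jet d N u) := by
  have hsolve : coeffMatrix K N *ᵥ -(((coeffMatrix K N)⁻¹ * lowerCoeff N K) *ᵥ jet d N u)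
      = -(lowerCoeff N K *ᵥ jet d N u) := by
    rw [mulVec_neg, mulVec_mulVec,
      mul_nonsing_inv_cancel_left _ _ ((isUnit_iff_isUnit_det _).1 hK)]
  rw [matOp_eq_add, add_eq_zero_iff_eq_neg, ← hsolve, (mulVec_injective_of_isUnit hK).eq_iff]

/-- The companion matrix of the system `d^(M+1) u = -B (jet u)`. -/
def companion (B : Matrix (Fin l) (Fin (M + 1) × Fin l) F) :
    Matrix (Fin (M + 1) × Fin l) (Fin (M + 1) × Fin l) F :=
  Matrix.of fun x => Fin.lastCases (motive := fun _ => Fin (M + 1) × Fin l → F) (-B x.2)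
    (fun n => Pi.single (n.succ, x.2) 1) x.1

theorem companion_mulVec_last (B : Matrix (Fin l) (Fin (M + 1) × Fin l) F)
    (y : Fin (M + 1) × Fin l → F) (i : Fin l) :
    (companion B *ᵥ y) (Fin.last M, i) = -(B *ᵥ y) i := by
  simp [companion, mulVec, dotProduct]

theorem companion_mulVec_castSucc (B : Matrix (Fin l) (Fin (M + 1) × Fin l) F)
    (y : Fin (M + 1) × Fin l → F) (n : Fin M) (i : Fin l) :
    (companion B *ᵥ y) (n.castSucc, i) = y (n.succ, i) := by
  simp [companion, mulVec]

theorem comp_jet_eq_companion_mulVec_iff (B : Matrix (Fin l) (Fin (M + 1) × Fin l) F)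
    (u : Fin l → F) : d ∘ jet d (M + 1) u = companion B *ᵥ jet d (M + 1) u ↔
      d^[M + 1] ∘ u = -(B *ᵥ jet d (M + 1) u) := by
  simp only [funext_iff, Prod.forall, Fin.forall_fin_succ', companion_mulVec_last,
    companion_mulVec_castSucc, jet, Function.comp_apply, ← Function.iterate_succ_apply',
    Fin.val_castSucc, Fin.val_succ, Fin.val_last, Pi.neg_apply, implies_true, true_and]

theorem eq_jet_of_comp_eq_companion_mulVec {B : Matrix (Fin l) (Fin (M + 1) × Fin l) F}
    {y : Fin (M + 1) × Fin l → F} (hy : d ∘ y = companion B *ᵥ y) :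
    y = jet d (M + 1) fun i => y (0, i) := by
  ext ⟨n, i⟩
  induction n using Fin.induction with
  | zero => rfl
  | succ n ih =>
    rw [← companion_mulVec_castSucc B y, ← hy, Function.comp_apply, ih]
    exact (Function.iterate_succ_apply' d n _).symm

theorem exists_isUnit_jetMatrix (hd : IsDerivation d) (hlc : LinearlyClosed d)
    {K : Fin l → Fin l → ℕ → F} (hK : IsUnit (coeffMatrix K (M + 1))) :
    ∃ v : Fin (M + 1) × Fin l → Fin l → F,
      (∀ α, matOp d (M + 1) K (v α) = 0) ∧ IsUnit (jetMatrix d (M + 1) v) := by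
  obtain ⟨Y, hY, hdY⟩ := exists_isUnit_map_eq_mul hd hlc
    (companion ((coeffMatrix K (M + 1))⁻¹ * lowerCoeff (M + 1) K))
  have hcol : ∀ α, d ∘ Y.col α = companion _ *ᵥ Y.col α := fun α =>
    funext fun x => congr_fun₂ hdY x α
  have hjet := fun α => eq_jet_of_comp_eq_companion_mulVec (hcol α)
  have hYjet : jetMatrix d (M + 1) (fun α i => Y (0, i) α) = Y :=
    ext fun x α => (congr_fun (hjet α) x).symm
  refine ⟨fun α i => Y (0, i) α, fun α => ?_, hYjet.symm ▸ hY⟩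
  rw [matOp_eq_zero_iff hK, ← comp_jet_eq_companion_mulVec_iff]
  exact hjet α ▸ hcol α

theorem map_jetMatrix_eq_companion_mul {K : Fin l → Fin l → ℕ → F}
    (hK : IsUnit (coeffMatrix K (M + 1))) {κ : Type*} {v : κ → Fin l → F}
    (hv : ∀ α, matOp d (M + 1) K (v α) = 0) :
    (jetMatrix d (M + 1) v).map d
      = companion ((coeffMatrix K (M + 1))⁻¹ * lowerCoeff (M + 1) K) * jetMatrix d (M + 1) v :=
  ext fun x α => congr_fun
    ((comp_jet_eq_companion_mulVec_iff _ _).2 ((matOp_eq_zero_iff hK).1 (hv α))) x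

end Companion

section Dual

variable {F : Type*} [Field F] {d : F → F} {l : ℕ}

/-- The vector of tails of Horner's scheme for the adjoint of the operator with coefficients `K`,
evaluated at `u`: `∑_k (-1)^k d^k (u K_{n+k})`. -/
def adjTailVec (d : F → F) (N : ℕ) (K : Fin l → Fin l → ℕ → F) (u : Fin l → F) (n : ℕ) :
    Fin l → F :=
  fun j => adjTail d N (fun m => (u ᵥ* coeffMatrix K m) j) n

/-- The coefficient vector of the bilinear concomitant of `K` in the jet of its first argument. -/
def concomitant (d : F → F) (N : ℕ) (K : Fin l → Fin l → ℕ → F) (u : Fin l → F) :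
    Fin N × Fin l → F :=
  fun x => adjTailVec d N K u (x.1 + 1) x.2

/-- The bilinear concomitant `[x, u]` of Lagrange's identity
`d [x, u] = u ⬝ᵥ K x - K* u ⬝ᵥ x`. -/
def lagrangeBracket (d : F → F) (N : ℕ) (K : Fin l → Fin l → ℕ → F) (x u : Fin l → F) : F :=
  concomitant d N K u ⬝ᵥ jet d N x

theorem matOpAdj_eq_adjTailVec (hd : IsDerivation d) (N : ℕ) (K : Fin l → Fin l → ℕ → F)
    (u : Fin l → F) : matOpAdj d N K u = adjTailVec d N K u 0 := by
  ext j
  simp only [matOpAdj, adjTailVec, adjTail, vecMul, dotProduct, coeffMatrix, of_apply,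
    hd.iterate_sum, mul_sum, Nat.sub_zero, zero_add, mul_comm (u _)]
  exact sum_comm

theorem adjTailVec_eq_sub (hd : IsDerivation d) {N : ℕ} (K : Fin l → Fin l → ℕ → F)
    (u : Fin l → F) {n : ℕ} (hn : n ≤ N) :
    adjTailVec d N K u n = u ᵥ* coeffMatrix K n - d ∘ adjTailVec d N K u (n + 1) :=
  funext fun _ => adjTail_eq_sub hd _ hn

theorem adjTailVec_self (hd : IsDerivation d) (N : ℕ) (K : Fin l → Fin l → ℕ → F)
    (u : Fin l → F) : adjTailVec d N K u N = u ᵥ* coeffMatrix K N :=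
  funext fun _ => adjTail_self hd _ _

theorem deriv_lagrangeBracket (hd : IsDerivation d) (N : ℕ) (K : Fin l → Fin l → ℕ → F)
    (x u : Fin l → F) :
    d (lagrangeBracket d N K x u) = u ⬝ᵥ matOp d N K x - matOpAdj d N K u ⬝ᵥ x := by
  have hscalar : ∀ j, d (∑ n ∈ range N, adjTailVec d N K u (n + 1) j * d^[n] (x j))
      = ∑ n ∈ range (N + 1), (u ᵥ* coeffMatrix K n) j * d^[n] (x j)
        - matOpAdj d N K u j * x j := fun j => by
    rw [matOpAdj_eq_adjTailVec hd]
    exact hd.isConnection.map_sum_adjTail_smul hd N _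
      fun n => (Function.iterate_succ_apply' d n (x j)).symm
  have hmatOp : u ⬝ᵥ matOp d N K x
      = ∑ j, ∑ n ∈ range (N + 1), (u ᵥ* coeffMatrix K n) j * d^[n] (x j) := by
    simp only [dotProduct, matOp, vecMul, coeffMatrix, of_apply, mul_sum, sum_mul, mul_assoc]
    rw [sum_comm]
    exact sum_congr rfl fun j _ => sum_comm
  rw [hmatOp, dotProduct, ← sum_sub_distrib, lagrangeBracket, dotProduct,
    Fintype.sum_prod_type_right, hd.map_sum]
  exact sum_congr rfl fun j _ => by rw [← hscalar, sum_range]; rfl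

/-- The matrix whose rows are the concomitants of the vectors `w α`. -/
def concomitantMatrix {κ : Type*} (d : F → F) (N : ℕ) (K : Fin l → Fin l → ℕ → F)
    (w : κ → Fin l → F) : Matrix κ (Fin N × Fin l) F :=
  Matrix.of fun α => concomitant d N K (w α)

/-- Fundamental systems `v` of `K u = 0` and `w` of `K* u = 0` that are dual under the
concomitant: `[v β, w α] = δ_{αβ}`. -/
structure IsDualSystem (d : F → F) (N : ℕ) (K : Fin l → Fin l → ℕ → F)
    (v w : Fin N × Fin l → Fin l → F) : Prop where
  matOp_eq_zero : ∀ α, matOp d N K (v α) = 0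
  matOpAdj_eq_zero : ∀ α, matOpAdj d N K (w α) = 0
  concomitantMatrix_mul_jetMatrix : concomitantMatrix d N K w * jetMatrix d N v = 1

theorem IsDerivation.map_matrix_mul (hd : IsDerivation d) {ι κ μ : Type*} [Fintype κ]
    (A : Matrix ι κ F) (B : Matrix κ μ F) : (A * B).map d = A.map d * B + A * B.map d :=
  ext fun i j => hd.map_dotProduct (A.row i) (B.col j)

theorem IsDerivation.map_matrix_inv (hd : IsDerivation d) {ι : Type*} [Fintype ι] [DecidableEq ι]
    {Y A : Matrix ι ι F} (hY : IsUnit Y) (hA : Y.map d = A * Y) : Y⁻¹.map d = -(Y⁻¹ * A) := by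
  have hdet := (isUnit_iff_isUnit_det _).1 hY
  have hone : (1 : Matrix ι ι F).map d = 0 := by
    ext i j
    by_cases h : i = j <;> simp [one_apply, h, hd.map_zero, hd.map_one]
  have h := hd.map_matrix_mul Y⁻¹ Y
  rw [nonsing_inv_mul _ hdet, hone, hA, ← Matrix.mul_assoc, ← Matrix.add_mul] at h
  exact eq_neg_of_add_eq_zero_left (hY.mul_left_eq_zero.1 h.symm)

/-- The block column selecting the block of index `m - 1`, which is zero for `m = 0`. -/
def blockCol (F : Type*) [Field F] (M l m : ℕ) : Matrix (Fin (M + 1) × Fin l) (Fin l) F :=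
  Matrix.of fun x j => if x.1 + 1 = m then (1 : Matrix (Fin l) (Fin l) F) x.2 j else 0

variable {M : ℕ}

theorem blockCol_zero : blockCol F M l 0 = 0 := by
  ext x j
  simp [blockCol]

theorem mul_blockCol_apply {κ : Type*} (A : Matrix κ (Fin (M + 1) × Fin l) F) (n : Fin (M + 1))
    (k : κ) (j : Fin l) : (A * blockCol F M l (n + 1)) k j = A k (n, j) := by
  simp [mul_apply, blockCol, Fintype.sum_prod_type, Fin.val_inj, one_apply]

theorem blockCol_mul_apply {κ : Type*} (m : ℕ) (A : Matrix (Fin l) κ F) (x : Fin (M + 1) × Fin l)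
    (k : κ) : (blockCol F M l m * A) x k = if x.1 + 1 = m then A x.2 k else 0 := by
  simp [mul_apply, blockCol, ite_mul, one_apply]

theorem companion_mul_blockCol (B : Matrix (Fin l) (Fin (M + 1) × Fin l) F) {m : ℕ} (hm : m ≤ M) :
    companion B * blockCol F M l (m + 1)
      = blockCol F M l m - blockCol F M l (M + 1) * (B * blockCol F M l (m + 1)) := by
  ext ⟨n, i⟩ j
  rw [Matrix.sub_apply, blockCol_mul_apply]
  change (companion B *ᵥ (blockCol F M l (m + 1)).col j) (n, i) = _
  induction n using Fin.lastCases with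
  | last =>
    have hne : M + 1 ≠ m := (Nat.lt_succ_of_le hm).ne'
    rw [companion_mulVec_last]
    simp [blockCol, hne, mulVec, mul_apply, dotProduct]
  | cast n =>
    rw [companion_mulVec_castSucc]
    simp [blockCol, n.2.ne]

theorem map_blockCol (hd : IsDerivation d) (m : ℕ) : (blockCol F M l m).map d = 0 := by
  ext x j
  simp [blockCol, one_apply, apply_ite d, hd.map_zero, hd.map_one]

theorem lowerCoeff_mul_blockCol (K : Fin l → Fin l → ℕ → F) {m : ℕ} (hm : m < M + 1) :
    lowerCoeff (M + 1) K * blockCol F M l (m + 1) = coeffMatrix K m :=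
  ext fun i j => mul_blockCol_apply _ ⟨m, hm⟩ i j

theorem concomitantMatrix_apply {κ : Type*} (N : ℕ) (K : Fin l → Fin l → ℕ → F)
    (w : κ → Fin l → F) (α : κ) (n : Fin N) (j : Fin l) :
    concomitantMatrix d N K w α (n, j) = adjTailVec d N K (w α) (n + 1) j :=
  rfl

theorem adjTailVec_inv_mul_blockCol (hd : IsDerivation d) {K : Fin l → Fin l → ℕ → F}
    (hK : IsUnit (coeffMatrix K (M + 1)))
    {V : Matrix (Fin (M + 1) × Fin l) (Fin (M + 1) × Fin l) F} (hV : IsUnit V)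
    (hdV : V.map d = companion ((coeffMatrix K (M + 1))⁻¹ * lowerCoeff (M + 1) K) * V)
    {m : ℕ} (hm : m ≤ M + 1) :
    (Matrix.of fun α => adjTailVec d (M + 1) K
      ((V⁻¹ * blockCol F M l (M + 1) * (coeffMatrix K (M + 1))⁻¹) α) m)
      = V⁻¹ * blockCol F M l m := by
  set L := (coeffMatrix K (M + 1))⁻¹
  set W := V⁻¹ * blockCol F M l (M + 1) * L with hW
  induction hm using Nat.decreasingInduction with
  | self =>
    have hself : (Matrix.of fun α => adjTailVec d (M + 1) K (W α) (M + 1))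
        = W * coeffMatrix K (M + 1) := ext fun α j => congr_fun (adjTailVec_self hd _ K (W α)) j
    rw [hself, nonsing_inv_mul_cancel_right _ _ ((isUnit_iff_isUnit_det _).1 hK)]
  | of_succ m hm ih =>
    have hstep : (Matrix.of fun α => adjTailVec d (M + 1) K (W α) m)
        = W * coeffMatrix K m - (V⁻¹ * blockCol F M l (m + 1)).map d := by
      rw [← ih]
      exact ext fun α j => congr_fun (adjTailVec_eq_sub hd K (W α) hm.le) j
    rw [hstep, hd.map_matrix_mul, map_blockCol hd, Matrix.mul_zero, add_zero,
      hd.map_matrix_inv hV hdV, Matrix.neg_mul, Matrix.mul_assoc V⁻¹,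
      companion_mul_blockCol _ (Nat.lt_succ_iff.1 hm), Matrix.mul_assoc L,
      lowerCoeff_mul_blockCol K hm, hW, Matrix.mul_sub]
    simp only [Matrix.mul_assoc]
    abel

theorem exists_isDualSystem (hd : IsDerivation d) (hlc : LinearlyClosed d)
    {K : Fin l → Fin l → ℕ → F} (hK : IsUnit (coeffMatrix K (M + 1))) :
    ∃ v w, IsDualSystem d (M + 1) K v w := by
  obtain ⟨v, hv, hV⟩ := exists_isUnit_jetMatrix hd hlc hK
  set V := jetMatrix d (M + 1) v
  let w : Fin (M + 1) × Fin l → Fin l → F :=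
    V⁻¹ * blockCol F M l (M + 1) * (coeffMatrix K (M + 1))⁻¹
  have htail : ∀ m ≤ M + 1, (Matrix.of fun α => adjTailVec d (M + 1) K (w α) m)
      = V⁻¹ * blockCol F M l m := fun _ hm =>
    adjTailVec_inv_mul_blockCol hd hK hV (map_jetMatrix_eq_companion_mul hK hv) hm
  refine ⟨v, w, hv, fun α => ?_, ?_⟩
  · rw [matOpAdj_eq_adjTailVec hd]
    have h0 := htail 0 (Nat.zero_le _)
    rw [blockCol_zero, Matrix.mul_zero] at h0
    exact congr_fun h0 α
  · have hT : concomitantMatrix d (M + 1) K w = V⁻¹ := by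
      ext α ⟨n, j⟩
      rw [concomitantMatrix_apply, ← mul_blockCol_apply V⁻¹]
      exact congr_fun₂ (htail (n + 1) n.2) α j
    rw [hT, nonsing_inv_mul _ ((isUnit_iff_isUnit_det _).1 hV)]

end Dual

section DualSystem

variable {F : Type*} [Field F] {d : F → F} {l N : ℕ} {K : Fin l → Fin l → ℕ → F}

theorem concomitant_mem_diffFunctional (hd : IsDerivation d) (N : ℕ) (K : Fin l → Fin l → ℕ → F)
    (x : Fin N × Fin l) : (fun u => concomitant d N K u x) ∈ diffFunctional d (Fin l) N := by
  have hcoeff : ∀ m, (fun u : Fin l → F => (u ᵥ* coeffMatrix K m) x.2)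
      ∈ diffFunctional d (Fin l) 1 := fun m => by
    refine mem_diffFunctional_iff.2 ⟨fun y => coeffMatrix K m y.2 x.2, fun u => ?_⟩
    simp [vecMul, dotProduct, jet, Fintype.sum_prod_type, mul_comm]
  have hsum : (∑ k ∈ range (N + 1 - (x.1 + 1)), fun u : Fin l → F =>
      (-1) ^ k * d^[k] ((u ᵥ* coeffMatrix K (x.1 + 1 + k)) x.2)) ∈ diffFunctional d (Fin l) N :=
    sum_mem fun k hk => diffFunctional_mono (by grind [mem_range.1 hk])
      (Submodule.smul_mem _ _ (iterate_deriv_mem_diffFunctional hd (hcoeff _) k))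
  convert hsum using 1
  ext u
  simp [concomitant, adjTailVec, adjTail]

theorem lagrangeBracket_mem_diffFunctional (hd : IsDerivation d) (x : Fin l → F) :
    (fun u => lagrangeBracket d N K x u) ∈ diffFunctional d (Fin l) N := by
  have hsum : (∑ y, fun u => jet d N x y * concomitant d N K u y) ∈ diffFunctional d (Fin l) N :=
    sum_mem fun y _ => Submodule.smul_mem _ (jet d N x y) (concomitant_mem_diffFunctional hd N K y)
  convert hsum using 1
  ext u
  simp [lagrangeBracket, dotProduct, mul_comm]

theorem jet_sum_smul (hd : IsDerivation d) {ι κ : Type*} [Fintype κ] {c : κ → F}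
    (hc : ∀ α, d (c α) = 0) (v : κ → ι → F) :
    jet d N (∑ α, c α • v α) = jetMatrix d N v *ᵥ c := by
  ext x
  simp [jet, jetMatrix, mulVec, dotProduct, hd.iterate_sum, hd.iterate_const_mul (hc _), mul_comm]

namespace IsDualSystem

variable {v w : Fin N × Fin l → Fin l → F}

theorem lagrangeBracket_eq_one_apply (h : IsDualSystem d N K v w) (α β : Fin N × Fin l) :
    lagrangeBracket d N K (v α) (w β) = (1 : Matrix (Fin N × Fin l) (Fin N × Fin l) F) β α := by
  rw [← h.concomitantMatrix_mul_jetMatrix]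
  rfl

theorem jet_eq_sum_left (h : IsDualSystem d N K v w) (x : Fin l → F) :
    jet d N x = ∑ α, lagrangeBracket d N K x (w α) • jet d N (v α) := by
  have hone := mul_eq_one_comm.1 h.concomitantMatrix_mul_jetMatrix
  rw [← one_mulVec (jet d N x), ← hone, ← mulVec_mulVec, mulVec_eq_sum]
  simp only [op_smul_eq_smul]
  rfl

/-- The concomitant of `u` depends linearly on the jet of `u`, so the duality of `v` and `w`
also inverts the jet matrix of `w`. -/
theorem exists_transpose_jetMatrix_mul_eq_one (h : IsDualSystem d N K v w) (hd : IsDerivation d) :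
    ∃ R : Matrix (Fin N × Fin l) (Fin N × Fin l) F,
      (∀ u, concomitant d N K u = jet d N u ᵥ* R) ∧
      (jetMatrix d N w)ᵀ * (R * jetMatrix d N v) = 1 := by
  choose R hR using fun x =>
    mem_diffFunctional_iff.1 (concomitant_mem_diffFunctional (d := d) hd N K x)
  have hconc : ∀ u, concomitant d N K u = jet d N u ᵥ* (Matrix.of R)ᵀ := fun u =>
    funext fun x => (hR x u).trans (dotProduct_comm _ _)
  refine ⟨(Matrix.of R)ᵀ, hconc, ?_⟩
  rw [← Matrix.mul_assoc, ← h.concomitantMatrix_mul_jetMatrix]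
  congr 1
  exact ext fun α x => (congr_fun (hconc (w α)) x).symm

theorem isUnit_jetMatrix_right (h : IsDualSystem d N K v w) (hd : IsDerivation d) :
    IsUnit (jetMatrix d N w) := by
  obtain ⟨R, -, hone⟩ := h.exists_transpose_jetMatrix_mul_eq_one hd
  exact (isUnit_transpose _).1 (.of_mul_eq_one _ hone)

theorem jet_eq_sum_right (h : IsDualSystem d N K v w) (hd : IsDerivation d) (u : Fin l → F) :
    jet d N u = ∑ α, lagrangeBracket d N K (v α) u • jet d N (w α) := by
  obtain ⟨R, hconc, hone⟩ := h.exists_transpose_jetMatrix_mul_eq_one hd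
  rw [← vecMul_one (jet d N u), ← mul_eq_one_comm.1 hone, ← vecMul_vecMul, ← vecMul_vecMul,
    ← hconc, vecMul_eq_sum]
  rfl

theorem jetMatrix_mulVec_injective (h : IsDualSystem d N K v w) :
    Function.Injective (jetMatrix d N v).mulVec :=
  Function.LeftInverse.injective (g := (concomitantMatrix d N K w).mulVec) fun c => by
    rw [mulVec_mulVec, h.concomitantMatrix_mul_jetMatrix, one_mulVec]

theorem linearIndependent_left (h : IsDualSystem d N K v w) (hd : IsDerivation d) {C : Subfield F}
    (hC : ∀ x, x ∈ C ↔ d x = 0) : LinearIndependent C v := by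
  refine Fintype.linearIndependent_iff.2 fun c hc α => ?_
  have hjet := jet_sum_smul (N := N) hd (fun α => (hC _).1 (c α).2) v
  rw [show ∑ α, (c α : F) • v α = 0 from hc] at hjet
  have hzero : jet d N (0 : Fin l → F) = 0 := funext fun x => hd.iterate_zero x.1
  exact Subtype.ext <| congr_fun (h.jetMatrix_mulVec_injective
    ((hjet.symm.trans hzero).trans (mulVec_zero _).symm)) α

theorem deriv_lagrangeBracket_right (h : IsDualSystem d N K v w) (hd : IsDerivation d)
    (x : Fin l → F) (α : Fin N × Fin l) :
    d (lagrangeBracket d N K x (w α)) = w α ⬝ᵥ matOp d N K x := by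
  rw [deriv_lagrangeBracket hd, h.matOpAdj_eq_zero, zero_dotProduct, sub_zero]

theorem deriv_lagrangeBracket_left (h : IsDualSystem d N K v w) (hd : IsDerivation d)
    (u : Fin l → F) (α : Fin N × Fin l) :
    d (lagrangeBracket d N K (v α) u) = -(matOpAdj d N K u ⬝ᵥ v α) := by
  rw [deriv_lagrangeBracket hd, h.matOp_eq_zero, dotProduct_zero, zero_sub]

variable {M : ℕ} {v w : Fin (M + 1) × Fin l → Fin l → F}

theorem eq_sum_left (h : IsDualSystem d (M + 1) K v w) (x : Fin l → F) :
    x = ∑ α, lagrangeBracket d (M + 1) K x (w α) • v α := by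
  ext i
  simpa [jet] using congr_fun (h.jet_eq_sum_left x) (0, i)

theorem eq_sum_right (h : IsDualSystem d (M + 1) K v w) (hd : IsDerivation d) (u : Fin l → F) :
    u = ∑ α, lagrangeBracket d (M + 1) K (v α) u • w α := by
  ext i
  simpa [jet] using congr_fun (h.jet_eq_sum_right hd u) (0, i)

theorem sum_iterate_smul_right_eq_zero (h : IsDualSystem d (M + 1) K v w) (hd : IsDerivation d)
    (hK : IsUnit (coeffMatrix K (M + 1))) {n : ℕ} (hn : n < M) (i : Fin l) :
    ∑ α, d^[n] (v α i) • w α = 0 := by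
  apply vecMul_injective_of_isUnit hK
  ext j
  have hinv := mul_eq_one_comm.1 h.concomitantMatrix_mul_jetMatrix
  have hone := congr_fun₂ hinv ((⟨n, by lia⟩ : Fin (M + 1)), i) (Fin.last M, j)
  rw [one_apply_ne (by simp [Fin.ext_iff, hn.ne])] at hone
  beta_reduce
  rw [zero_vecMul, Pi.zero_apply, ← hone, sum_vecMul, Finset.sum_apply]
  refine sum_congr rfl fun α _ => ?_
  change _ = d^[n] (v α i) * adjTailVec d (M + 1) K (w α) (M + 1) j
  rw [adjTailVec_self hd, smul_vecMul, Pi.smul_apply, smul_eq_mul]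

theorem sum_iterate_mul_iterate_eq_zero (h : IsDualSystem d (M + 1) K v w) (hd : IsDerivation d)
    (hK : IsUnit (coeffMatrix K (M + 1))) {n k : ℕ} (hnk : n + k < M) (i r : Fin l) :
    ∑ α, d^[n] (v α i) * d^[k] (w α r) = 0 := by
  induction k generalizing n with
  | zero => simpa using congr_fun (h.sum_iterate_smul_right_eq_zero hd hK hnk i) r
  | succ k ih =>
    have hderiv := hd.map_dotProduct (fun α => d^[n] (v α i)) fun α => d^[k] (w α r)
    simp only [dotProduct, Function.comp_apply, ← Function.iterate_succ_apply'] at hderiv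
    rwa [ih (by lia), ih (by lia), hd.map_zero, zero_add, eq_comm] at hderiv

theorem sum_lagrangeBracket_smul_eq_zero (h : IsDualSystem d (M + 1) K v w) (hd : IsDerivation d)
    (hK : IsUnit (coeffMatrix K (M + 1))) (P : Fin l → Fin l → ℕ → F) (f : Fin l → F) :
    ∑ α, lagrangeBracket d M P (w α) f • v α = 0 := by
  ext i
  have hjet : ∀ x : Fin M × Fin l, ∑ α, v α i * jet d M (w α) x = 0 := fun x =>
    h.sum_iterate_mul_iterate_eq_zero (n := 0) hd hK (by lia) i x.2
  simp only [lagrangeBracket, dotProduct, Finset.sum_apply, Pi.smul_apply, smul_eq_mul, sum_mul]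
  rw [sum_comm]
  refine sum_eq_zero fun x _ => ?_
  rw [← mul_zero (concomitant d M P f x), ← hjet x, mul_sum]
  exact sum_congr rfl fun α _ => by ring

theorem eq_sum_of_matOp_eq_zero (h : IsDualSystem d (M + 1) K v w) (hd : IsDerivation d)
    {C : Subfield F} (hC : ∀ x, x ∈ C ↔ d x = 0) {x : Fin l → F} (hx : matOp d (M + 1) K x = 0) :
    ∃ c : Fin (M + 1) × Fin l → C, x = ∑ α, c α • v α :=
  ⟨fun α => ⟨lagrangeBracket d (M + 1) K x (w α), (hC _).2 <| by
    rw [h.deriv_lagrangeBracket_right hd, hx, dotProduct_zero]⟩, h.eq_sum_left x⟩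

theorem eq_zero_of_sum_smul_eq_zero (h : IsDualSystem d (M + 1) K v w) (hd : IsDerivation d)
    (hK : IsUnit (coeffMatrix K (M + 1))) {e : Fin (M + 1) × Fin l → F} {a : Fin l → F}
    (he : ∑ α, e α • v α = 0) (hde : ∀ α, d (e α) = w α ⬝ᵥ a) : a = 0 := by
  have hjet : ∀ n ≤ M, ∀ i, ∑ α, e α * d^[n] (v α i) = 0 := fun n hn i => by
    induction n with
    | zero => simpa using congr_fun he i
    | succ n ih =>
      have hderiv := hd.map_dotProduct e fun α => d^[n] (v α i)
      have hlower : (d ∘ e) ⬝ᵥ (fun α => d^[n] (v α i)) = 0 := by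
        rw [← zero_dotProduct a, ← h.sum_iterate_smul_right_eq_zero hd hK hn i, sum_dotProduct]
        exact sum_congr rfl fun α _ => by
          rw [smul_dotProduct, smul_eq_mul, Function.comp_apply, hde, mul_comm]
      rw [hlower, dotProduct, ih (by lia), hd.map_zero, zero_add] at hderiv
      simpa only [dotProduct, Function.comp_apply, ← Function.iterate_succ_apply'] using hderiv.symm
  have he0 : e = 0 := h.jetMatrix_mulVec_injective <| by
    rw [mulVec_zero]
    ext x
    simpa [mulVec, dotProduct, jetMatrix, jet, mul_comm] using hjet x.1 (by lia) x.2
  refine dotProduct_eq_zero _ fun u => ?_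
  rw [dotProduct_comm, h.eq_sum_right hd u, sum_dotProduct]
  refine sum_eq_zero fun α _ => ?_
  rw [smul_dotProduct, ← hde, he0, Pi.zero_apply, hd.map_zero, smul_zero]

end IsDualSystem

end DualSystem

section Selfadjoint

variable {F : Type*} [Field F] {d : F → F} {l M : ℕ} {K P : Fin l → Fin l → ℕ → F} {C : Subfield F}
  {v w : Fin (M + 1) × Fin l → Fin l → F}

theorem matOp_eq_lowerCoeff_mulVec (P : Fin l → Fin l → ℕ → F) (u : Fin l → F) :
    matOp d M P u = lowerCoeff (M + 1) P *ᵥ jet d (M + 1) u := by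
  ext i
  simp [matOp, mulVec, dotProduct, lowerCoeff, jet, Fintype.sum_prod_type_right, sum_range]

/-- For `P (w γ) = ∑ β, c γ β • v β`, the primitive of `w γ ⬝ᵥ (K (P u) - P* (K* u))` obtained
from the bilinear concomitants of `K` and of `P`. -/
noncomputable def selfadjointDefect (d : F → F) (M : ℕ) (K P : Fin l → Fin l → ℕ → F)
    (v w : Fin (M + 1) × Fin l → Fin l → F)
    (c : Matrix (Fin (M + 1) × Fin l) (Fin (M + 1) × Fin l) C) (u : Fin l → F)
    (γ : Fin (M + 1) × Fin l) : F :=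
  lagrangeBracket d (M + 1) K (matOp d M P u) (w γ)
    + lagrangeBracket d M P (w γ) (matOpAdj d (M + 1) K u)
    + ∑ β, c γ β • lagrangeBracket d (M + 1) K (v β) u

namespace IsDualSystem

theorem matOp_eq_sum (h : IsDualSystem d (M + 1) K v w) (hd : IsDerivation d) (u : Fin l → F) :
    matOp d M P u = ∑ α, lagrangeBracket d (M + 1) K (v α) u • matOp d M P (w α) := by
  simp only [matOp_eq_lowerCoeff_mulVec, ← mulVec_smul, ← mulVec_sum]
  rw [← h.jet_eq_sum_right hd]

variable {c : Matrix (Fin (M + 1) × Fin l) (Fin (M + 1) × Fin l) C}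

theorem deriv_selfadjointDefect (h : IsDualSystem d (M + 1) K v w) (hd : IsDerivation d)
    (hC : ∀ x, x ∈ C ↔ d x = 0) (hP : ∀ α, matOp d M P (w α) = ∑ β, c α β • v β) (u : Fin l → F)
    (γ : Fin (M + 1) × Fin l) :
    d (selfadjointDefect d M K P v w c u γ)
      = w γ ⬝ᵥ (matOp d (M + 1) K (matOp d M P u) - matOpAdj d M P (matOpAdj d (M + 1) K u)) := by
  have hsum : d (∑ β, c γ β • lagrangeBracket d (M + 1) K (v β) u)
      = -(matOpAdj d (M + 1) K u ⬝ᵥ matOp d M P (w γ)) := by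
    rw [hd.map_sum, hP, dotProduct_sum, ← sum_neg_distrib]
    refine sum_congr rfl fun β _ => ?_
    rw [Subfield.smul_def, smul_eq_mul, hd.map_const_mul ((hC _).1 (c γ β).2),
      h.deriv_lagrangeBracket_left hd, dotProduct_smul, Subfield.smul_def, smul_eq_mul, mul_neg]
  rw [selfadjointDefect, hd.map_add, hd.map_add, h.deriv_lagrangeBracket_right hd,
    deriv_lagrangeBracket hd, hsum, dotProduct_sub, dotProduct_comm (w γ) (matOpAdj _ _ _ _)]
  ring

theorem sum_selfadjointDefect_smul (h : IsDualSystem d (M + 1) K v w) (hd : IsDerivation d)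
    (hK : IsUnit (coeffMatrix K (M + 1))) (hP : ∀ α, matOp d M P (w α) = ∑ β, c α β • v β)
    (u : Fin l → F) :
    ∑ γ, selfadjointDefect d M K P v w c u γ • v γ
      = ∑ α, lagrangeBracket d (M + 1) K (v α) u • ∑ β, (c + cᵀ) α β • v β := by
  have hleft : matOp d M P u
      = ∑ α, lagrangeBracket d (M + 1) K (v α) u • ∑ β, c α β • v β := by
    rw [h.matOp_eq_sum hd]
    exact sum_congr rfl fun α _ => by rw [hP]
  have hright : ∑ γ, (∑ β, c γ β • lagrangeBracket d (M + 1) K (v β) u) • v γ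
      = ∑ α, lagrangeBracket d (M + 1) K (v α) u • ∑ β, cᵀ α β • v β := by
    simp only [sum_smul, smul_sum, transpose_apply]
    rw [sum_comm]
    exact sum_congr rfl fun α _ => sum_congr rfl fun β _ => by rw [smul_assoc, smul_comm]
  simp only [selfadjointDefect, add_smul, sum_add_distrib, Matrix.add_apply, smul_add]
  rw [← h.eq_sum_left, h.sum_lagrangeBracket_smul_eq_zero hd hK, hright, hleft, add_zero]

theorem add_transpose_eq_zero (h : IsDualSystem d (M + 1) K v w) (hd : IsDerivation d)
    (hlc : LinearlyClosed d) (hC : ∀ x, x ∈ C ↔ d x = 0) (hK : IsUnit (coeffMatrix K (M + 1)))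
    (hP : ∀ α, matOp d M P (w α) = ∑ β, c α β • v β)
    (hKP : ∀ u, matOp d (M + 1) K (matOp d M P u) = matOpAdj d M P (matOpAdj d (M + 1) K u)) :
    c + cᵀ = 0 := by
  set y : Fin (M + 1) × Fin l → Fin l → F := fun α => ∑ β, (c + cᵀ) α β • v β
  have hconst : ∀ u γ, selfadjointDefect d M K P v w c u γ ∈ C := fun u γ => by
    rw [hC, h.deriv_selfadjointDefect hd hC hP, hKP, sub_self, dotProduct_zero]
  have hspan : ∀ j u, ∑ α, lagrangeBracket d (M + 1) K (v α) u * y α j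
      ∈ Submodule.span C (Set.range fun γ => v γ j) := fun j u => by
    refine (Submodule.mem_span_range_iff_exists_fun C).2 ⟨fun γ => ⟨_, hconst u γ⟩, ?_⟩
    simpa only [Finset.sum_apply, Pi.smul_apply, Subfield.smul_def, smul_eq_mul, y]
      using congr_fun (h.sum_selfadjointDefect_smul hd hK hP u) j
  have hzero : ∀ j, (fun u => ∑ α, lagrangeBracket d (M + 1) K (v α) u * y α j) = 0 := fun j => by
    have hfin : FiniteDimensional C (Submodule.span C (Set.range fun γ => v γ j)) :=
      .span_of_finite C (Set.finite_range _)
    refine eq_zero_of_mem_diffFunctional_of_forall_mem (k := M + 1) hlc hd hC ?_ _ (hspan j)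
    have hsum : (∑ α, y α j • fun u => lagrangeBracket d (M + 1) K (v α) u)
        ∈ diffFunctional d (Fin l) (M + 1) :=
      sum_mem fun α _ => Submodule.smul_mem _ _ (lagrangeBracket_mem_diffFunctional hd (v α))
    convert hsum using 1
    ext u
    simp [mul_comm]
  have hy : ∀ α, y α = 0 := fun α => funext fun j => by
    simpa [h.lagrangeBracket_eq_one_apply, one_apply] using congr_fun (hzero j) (w α)
  ext α β
  exact congr_arg _ (Fintype.linearIndependent_iff.1 (h.linearIndependent_left hd hC) _ (hy α) β)

end IsDualSystem

end Selfadjoint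

section SkewSymmetric

theorem card_subtype_fst_lt_snd (ι : Type*) [Fintype ι] [LinearOrder ι] :
    Fintype.card {x : ι × ι // x.1 < x.2} = (Fintype.card ι).choose 2 := by
  rw [← Sym2.card_subtype_not_diag]
  refine Fintype.card_of_bijective (f := fun x => ⟨s(x.1.1, x.1.2), x.2.ne⟩) ⟨?_, ?_⟩
  · rintro ⟨⟨i, j⟩, hij⟩ ⟨⟨i', j'⟩, hij'⟩ h
    grind
  · rintro ⟨z, hz⟩
    induction z with | _ i j =>
    rcases lt_or_gt_of_ne (show i ≠ j from hz) with hij | hij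
    · exact ⟨⟨(i, j), hij⟩, rfl⟩
    · exact ⟨⟨(j, i), hij⟩, Subtype.ext Sym2.eq_swap⟩

variable {R ι : Type*} [CommRing R] [Fintype ι] [DecidableEq ι]

/-- The skew-symmetric matrices, as the skew-adjoint matrices of the standard bilinear form. -/
abbrev skewMatrices (R ι : Type*) [CommRing R] [Fintype ι] [DecidableEq ι] :
    Submodule R (Matrix ι ι R) :=
  skewAdjointMatricesSubmodule 1

theorem mem_skewMatrices {A : Matrix ι ι R} :
    A ∈ skewMatrices R ι ↔ Aᵀ = -A := by
  simp [Matrix.IsSkewAdjoint, Matrix.IsAdjointPair]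

theorem apply_eq_neg_of_mem_skewMatrices {A : Matrix ι ι R}
    (hA : A ∈ skewMatrices R ι) (i j : ι) : A i j = -A j i :=
  congr_fun₂ (mem_skewMatrices.1 hA) j i

/-- The entries above the diagonal of a skew-symmetric matrix. -/
def upperEntries (R ι : Type*) [CommRing R] [Fintype ι] [DecidableEq ι] [LT ι] :
    skewMatrices R ι →ₗ[R] {x : ι × ι // x.1 < x.2} → R where
  toFun A x := A.1 x.1.1 x.1.2
  map_add' _ _ := rfl
  map_smul' _ _ := rfl

theorem upperEntries_bijective [IsDomain R] [LinearOrder ι] (h2 : (2 : R) ≠ 0) :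
    Function.Bijective (upperEntries R ι) := by
  refine ⟨fun A B h => ?_, fun g => ?_⟩
  · have hlt : ∀ i j, i < j → A.1 i j = B.1 i j := fun i j hij => congr_fun h ⟨(i, j), hij⟩
    ext i j
    rcases lt_trichotomy i j with hij | rfl | hij
    · exact hlt i j hij
    · have hdiag : ∀ D ∈ skewMatrices R ι, D i i = 0 := fun D hD => by
        have hsum := eq_neg_iff_add_eq_zero.1 (apply_eq_neg_of_mem_skewMatrices hD i i)
        exact (mul_eq_zero.1 ((two_mul _).trans hsum)).resolve_left h2
      rw [hdiag A A.2, hdiag B B.2]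
    · rw [apply_eq_neg_of_mem_skewMatrices A.2, apply_eq_neg_of_mem_skewMatrices B.2, hlt j i hij]
  · refine ⟨⟨Matrix.of fun i j => if h : i < j then g ⟨(i, j), h⟩ else
      if h : j < i then -g ⟨(j, i), h⟩ else 0, ?_⟩, ?_⟩
    · refine mem_skewMatrices.2 (ext fun i j => ?_)
      rcases lt_trichotomy i j with hij | rfl | hij <;> simp [*, not_lt_of_gt]
    · exact funext fun x => dif_pos x.2

theorem rank_skewMatrices [IsDomain R] (h2 : (2 : R) ≠ 0) :
    Module.rank R (skewMatrices R ι) = ((Fintype.card ι).choose 2 : Cardinal) := by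
  let := LinearOrder.lift' _ (Fintype.equivFin ι).injective
  rw [(LinearEquiv.ofBijective _ (upperEntries_bijective h2)).rank_eq, rank_fun',
    card_subtype_fst_lt_snd]

end SkewSymmetric

section Main

variable {F : Type*} [Field F] {d : F → F} {l M : ℕ} {K : Fin l → Fin l → ℕ → F} {C : Subfield F}

theorem matOpAdj_zero (hd : IsDerivation d) (N : ℕ) (P : Fin l → Fin l → ℕ → F) :
    matOpAdj d N P 0 = 0 := by
  ext i
  simp [matOpAdj, hd.iterate_zero]

theorem IsDualSystem.selfadjoint_iff {v w : Fin (M + 1) × Fin l → Fin l → F}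
    (h : IsDualSystem d (M + 1) K v w) (hd : IsDerivation d) (hlc : LinearlyClosed d)
    (hC : ∀ x, x ∈ C ↔ d x = 0) (hK : IsUnit (coeffMatrix K (M + 1)))
    {P : Fin l → Fin l → ℕ → F} :
    (∀ u, matOp d (M + 1) K (matOp d M P u) = matOpAdj d M P (matOpAdj d (M + 1) K u)) ↔
      ∃ c ∈ skewMatrices C (Fin (M + 1) × Fin l),
        ∀ α, matOp d M P (w α) = ∑ β, c α β • v β := by
  constructor
  · intro hKP
    have hker : ∀ α, matOp d (M + 1) K (matOp d M P (w α)) = 0 := fun α => by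
      rw [hKP, h.matOpAdj_eq_zero, matOpAdj_zero hd]
    choose c hc using fun α => h.eq_sum_of_matOp_eq_zero hd hC (hker α)
    exact ⟨c, mem_skewMatrices.2 <| eq_neg_of_add_eq_zero_right <|
      h.add_transpose_eq_zero hd hlc hC hK hc hKP, hc⟩
  · rintro ⟨c, hc, hP⟩ u
    refine sub_eq_zero.1 <| h.eq_zero_of_sum_smul_eq_zero hd hK ?_
      (h.deriv_selfadjointDefect hd hC hP u)
    rw [h.sum_selfadjointDefect_smul hd hK hP, mem_skewMatrices.1 hc]
    simp

/-- The values at the vectors `w α` of the operator of order less than `N` with coefficients `p`. -/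
def evalOn (C : Subfield F) (d : F → F) (N : ℕ) {κ : Type*} (w : κ → Fin l → F) :
    (Fin l → Fin l → Fin N → F) →ₗ[C] κ → Fin l → F where
  toFun p α j := ∑ r, ∑ q : Fin N, p j r q * d^[q] (w α r)
  map_add' p p' := by
    ext α j
    simp [add_mul, sum_add_distrib]
  map_smul' a p := by
    ext α j
    simp [Subfield.smul_def, mul_sum, mul_assoc]

theorem evalOn_apply_eq_vecMul (N : ℕ) {κ : Type*} (w : κ → Fin l → F)
    (p : Fin l → Fin l → Fin N → F) (α : κ) (j : Fin l) :
    evalOn C d N w p α j = ((fun x => p j x.2 x.1) ᵥ* jetMatrix d N w) α := by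
  simp [evalOn, vecMul, dotProduct, jetMatrix, jet, Fintype.sum_prod_type_right]

theorem evalOn_bijective {N : ℕ} {w : Fin N × Fin l → Fin l → F} (hw : IsUnit (jetMatrix d N w)) :
    Function.Bijective (evalOn C d N w) := by
  refine ⟨fun p p' h => ?_, fun y => ?_⟩
  · ext j r q
    refine congr_fun (vecMul_injective_of_isUnit hw
      (a₁ := fun x => p j x.2 x.1) (a₂ := fun x => p' j x.2 x.1) (funext fun α => ?_)) (q, r)
    simpa only [evalOn_apply_eq_vecMul] using congr_fun₂ h α j
  · choose a ha using fun j => vecMul_surjective_iff_isUnit.2 hw fun α => y α j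
    refine ⟨fun j r q => a j (q, r), ?_⟩
    ext α j
    exact (evalOn_apply_eq_vecMul N w _ α j).trans (congr_fun (ha j) α)

/-- The combinations of the vectors `v β` with the rows of a matrix of constants. -/
def rowCombination (C : Subfield F) {ι : Type*} [Fintype ι] (v : ι → Fin l → F) :
    Matrix ι ι C →ₗ[C] ι → Fin l → F :=
  (Fintype.linearCombination C v).compLeft ι

theorem rowCombination_injective {ι : Type*} [Fintype ι] {v : ι → Fin l → F}
    (hv : LinearIndependent C v) : Function.Injective (rowCombination C v) :=
  (linearIndependent_iff_injective_fintypeLinearCombination.1 hv).comp_left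

theorem matOp_ofNat (p : Fin l → Fin l → Fin (M + 1) → F) (u : Fin l → F) :
    matOp d M (fun j r n => p j r (Fin.ofNat (M + 1) n)) u
      = fun j => ∑ r, ∑ q : Fin (M + 1), p j r q * d^[q] (u r) := by
  ext j
  simp [matOp, sum_range]

theorem matOpAdj_ofNat (p : Fin l → Fin l → Fin (M + 1) → F) (u : Fin l → F) :
    matOpAdj d M (fun j r n => p j r (Fin.ofNat (M + 1) n)) u
      = fun i => ∑ j, ∑ q : Fin (M + 1), (-1 : F) ^ (q : ℕ) * d^[q] (p j i q * u j) := by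
  ext i
  simp [matOpAdj, sum_range]

theorem IsDualSystem.map_evalOn_eq {v w : Fin (M + 1) × Fin l → Fin l → F}
    (h : IsDualSystem d (M + 1) K v w) (hd : IsDerivation d) (hlc : LinearlyClosed d)
    (hC : ∀ x, x ∈ C ↔ d x = 0) (hK : IsUnit (coeffMatrix K (M + 1)))
    {S : Submodule C (Fin l → Fin l → Fin (M + 1) → F)}
    (hS : ∀ p, p ∈ S ↔ ∀ u : Fin l → F,
      matOp d (M + 1) K (fun j => ∑ r, ∑ q : Fin (M + 1), p j r q * d^[(q : ℕ)] (u r))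
        = fun i => ∑ j, ∑ q : Fin (M + 1),
            (-1 : F) ^ (q : ℕ) * d^[(q : ℕ)] (p j i q * matOpAdj d (M + 1) K u j)) :
    S.map (evalOn C d (M + 1) w)
      = (skewMatrices C (Fin (M + 1) × Fin l)).map (rowCombination C v) := by
  refine Eq.trans ?_ (Submodule.map_comap_eq_of_surjective
    (evalOn_bijective (h.isUnit_jetMatrix_right hd)).2 _)
  congr 1
  ext p
  simp only [hS, ← matOp_ofNat, ← matOpAdj_ofNat, h.selfadjoint_iff hd hlc hC hK]
  refine exists_congr fun c => and_congr_right fun _ => ?_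
  rw [eq_comm, funext_iff]
  exact forall_congr' fun α => by rw [matOp_ofNat]; rfl

end Main

theorem stmt_9_general (F : Type*) [Field F] (h2 : (2 : F) ≠ 0) (d : F → F) (hd : IsDerivation d)
    (hlc : LinearlyClosed d)
    (C : Subfield F) (hC : ∀ x : F, x ∈ C ↔ d x = 0)
    (l N : ℕ) (K : Fin l → Fin l → ℕ → F)
    (hK : IsUnit (Matrix.of fun i j : Fin l => K i j N))
    (S : Submodule C (Fin l → Fin l → Fin N → F))
    (hS : ∀ p : Fin l → Fin l → Fin N → F, p ∈ S ↔ ∀ u : Fin l → F,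
      matOp d N K (fun j => ∑ r, ∑ q : Fin N, p j r q * d^[(q : ℕ)] (u r))
        = fun i => ∑ j, ∑ q : Fin N,
            (-1 : F) ^ (q : ℕ) * d^[(q : ℕ)] (p j i q * matOpAdj d N K u j)) :
    Module.rank C S = ((N * l).choose 2 : Cardinal) := by
  cases N with
  | zero => simp [rank_subsingleton']
  | succ M =>
    obtain ⟨v, w, h⟩ := exists_isDualSystem hd hlc hK
    have hev := evalOn_bijective (C := C) (h.isUnit_jetMatrix_right hd)
    have hcomb := rowCombination_injective (h.linearIndependent_left hd hC)
    have h2C : (2 : C) ≠ 0 := fun h0 => h2 (congr_arg Subtype.val h0)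
    calc Module.rank C S
        = Module.rank C (skewMatrices C (Fin (M + 1) × Fin l)) := by
          rw [(Submodule.equivMapOfInjective _ hev.1 S).rank_eq, h.map_evalOn_eq hd hlc hC hK hS]
          exact (Submodule.equivMapOfInjective _ hcomb _).rank_eq.symm
      _ = (((M + 1) * l).choose 2 : Cardinal) := by
          rw [rank_skewMatrices h2C, Fintype.card_prod, Fintype.card_fin, Fintype.card_fin]

/-- Let `F` be a linearly closed differential field of characteristic zero with constants
`C`, and let `K` be an `ℓ×ℓ` matrix differential operator of order `N` with invertible
leading coefficient.  The coefficient families `(P_{ij,n})`, `0 ≤ n ≤ N−1`, for which the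
matrix differential operator `P(u)_i = Σ_{j,n} P_{ij,n} d^n u_j` of order at most `N−1`
makes `K∘P` selfadjoint (i.e. `K(P(u)) = P*(K*(u))` for all `u ∈ F^ℓ`) form a
`C`-subspace of `F^{ℓ²N}` of dimension `Nℓ choose 2`. -/
theorem stmt_9 (F : Type*) [Field F] [CharZero F] (d : F → F) (hd : IsDerivation d)
    (hlc : LinearlyClosed d)
    (C : Subfield F) (hC : ∀ x : F, x ∈ C ↔ d x = 0)
    (l N : ℕ) (K : Fin l → Fin l → ℕ → F)
    (hK : IsUnit (Matrix.of fun i j : Fin l => K i j N))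
    (S : Submodule C (Fin l → Fin l → Fin N → F))
    (hS : ∀ p : Fin l → Fin l → Fin N → F, p ∈ S ↔ ∀ u : Fin l → F,
      matOp d N K (fun j => ∑ r, ∑ q : Fin N, p j r q * d^[(q : ℕ)] (u r))
        = fun i => ∑ j, ∑ q : Fin N,
            (-1 : F) ^ (q : ℕ) * d^[(q : ℕ)] (p j i q * matOpAdj d N K u j)) :
    Module.rank C S = ((N * l).choose 2 : Cardinal) :=
  stmt_9_general F two_ne_zero d hd hlc C hC l N K hK S hS
end
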